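/- arXiv:2002.09294 — 2 statements merged into one kernel-verified Lean document; each statement's English description precedes it below -/
import Mathlib

section
/- Let X be a standard Borel space, E a countable Borel equivalence relation on X, ρ : E → (0,∞) a Borel cocycle, and B ⊆ X a Borel set with positive ρ-density. Then every finite Borel measure on B that is invariant with respect to the restriction of ρ to E restricted to B extends to a ρ-invariant finite Borel measure on X. -/
open MeasureTheory Set ENNReal

namespace CocycleNadkarni

variable {X : Type*} {Γ : Type*}

/-- The `ρ`-size of `Y` relative to the point `z`: `∑_{y ∈ Y} ρ(y, z)`. -/
noncomputable def eSize (ρ : X → X → ℝ) (Y : Set X) (z : X) : ℝ≥0∞ :=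
  ∑' y : Y, ENNReal.ofReal (ρ y z)

/-- The `ρ`-size of `Y` relative to the set `Z`, computed at the point `z`. -/
noncomputable def relSize (ρ : X → X → ℝ) (Y Z : Set X) (z : X) : ℝ≥0∞ :=
  eSize ρ Y z / eSize ρ Z z

/-- Real-valued `ρ`-size (used for finite sets). -/
noncomputable def rSize (ρ : X → X → ℝ) (Y : Set X) (z : X) : ℝ :=
  ∑' y : Y, ρ y z

/-- `∫_C f dμ^ρ_S`, computed at the point `z`. -/
noncomputable def avgOn (ρ : X → X → ℝ) (f : X → ℝ) (S C : Set X) (z : X) : ℝ :=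
  (∑' y : ↥(S ∩ C), f y * ρ y z) / rSize ρ S z

/-- countable Borel equivalence relation -/
def IsCBER [MeasurableSpace X] (E : X → X → Prop) : Prop :=
  Equivalence E ∧ MeasurableSet {p : X × X | E p.1 p.2} ∧ ∀ x : X, {y | E x y}.Countable

/-- Borel cocycle `ρ : E → (0, ∞)` (as a total function whose values off `E` are irrelevant). -/
def IsCocycle [MeasurableSpace X] (E : X → X → Prop) (ρ : X → X → ℝ) : Prop :=
  Measurable (fun p : X × X => ρ p.1 p.2) ∧
    (∀ ⦃x y : X⦄, E x y → 0 < ρ x y) ∧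
    ∀ ⦃x y z : X⦄, E x y → E y z → ρ x z = ρ x y * ρ y z

/-- Borel cocycle into a group `Γ`. -/
def IsGrpCocycle [MeasurableSpace X] [Group Γ] [MeasurableSpace Γ]
    (E : X → X → Prop) (ρ : X → X → Γ) : Prop :=
  Measurable (fun p : X × X => ρ p.1 p.2) ∧
    ∀ ⦃x y z : X⦄, E x y → E y z → ρ x z = ρ x y * ρ y z

/-- finite Borel subequivalence relation of `E` -/
def IsFinSubequiv [MeasurableSpace X] (E F : X → X → Prop) : Prop :=
  Equivalence F ∧ MeasurableSet {p : X × X | F p.1 p.2} ∧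
    (∀ ⦃x y : X⦄, F x y → E x y) ∧ ∀ x : X, {y | F x y}.Finite

/-- finite Borel subequivalence relation of `E` restricted to `W` (extended by the diagonal). -/
def IsFinSubequivOn [MeasurableSpace X] (E : X → X → Prop) (W : Set X)
    (F : X → X → Prop) : Prop :=
  Equivalence F ∧ MeasurableSet {p : X × X | F p.1 p.2} ∧
    (∀ ⦃x y : X⦄, F x y → x = y ∨ (E x y ∧ x ∈ W ∧ y ∈ W)) ∧ ∀ x : X, {y | F x y}.Finite

/-- `ρ`-invariance of a Borel measure. -/
def IsInvariant [MeasurableSpace X] (E : X → X → Prop) (ρ : X → X → ℝ)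
    (μ : Measure X) : Prop :=
  ∀ T : X ≃ᵐ X, (∀ x, E (T x) x) → ∀ B : Set X, MeasurableSet B →
    μ (T '' B) = ∫⁻ x in B, ENNReal.ofReal (ρ (T x) x) ∂μ

/-- invariance w.r.t. the restriction of `ρ` to a set `R` of pairs, via Borel injections
whose graphs are contained in `R⁻¹`. -/
def IsInvariantRel [MeasurableSpace X] (R : Set (X × X)) (ρ : X → X → ℝ)
    (μ : Measure X) : Prop :=
  ∀ (B : Set X) (T : X → X), MeasurableSet B → Measurable T → Set.InjOn T B →
    (∀ x ∈ B, ((T x, x) : X × X) ∈ R) →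
    μ (T '' B) = ∫⁻ x in B, ENNReal.ofReal (ρ (T x) x) ∂μ

/-- a Borel ℕ-coloring of the lacunarity digraph `G^ρ_Z`. -/
def HasColoring [MeasurableSpace X] (E : X → X → Prop) (ρ : X → X → Γ)
    (Z : Set Γ) : Prop :=
  ∃ c : X → ℕ, Measurable c ∧
    ∀ ⦃x y : X⦄, x ≠ y → E x y → ρ x y ∈ Z → c x ≠ c y

/-- smoothness of the cocycle `ρ` restricted to `E` restricted to `W`. -/
def SmoothOn [MeasurableSpace X] (E : X → X → Prop) (ρ : X → X → ℝ)
    (W : Set X) : Prop :=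
  ∃ U : Set ℝ, IsOpen U ∧ (1:ℝ) ∈ U ∧ U ⊆ Set.Ioi 0 ∧
    ∃ c : X → ℕ, Measurable c ∧
      ∀ ⦃x y : X⦄, x ∈ W → y ∈ W → x ≠ y → E x y → ρ x y ∈ U → c x ≠ c y

/-- smoothness of the cocycle `ρ` on `E`. -/
def Smooth [MeasurableSpace X] (E : X → X → Prop) (ρ : X → X → ℝ) : Prop :=
  SmoothOn E ρ Set.univ

/-- `E`-invariance of a set. -/
def EInvariant (E : X → X → Prop) (B : Set X) : Prop :=
  ∀ ⦃x y : X⦄, E x y → x ∈ B → y ∈ B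

/-- a compression of `ρ` over the finite subequivalence relation `F` of `E`. -/
def CompressionOver [MeasurableSpace X] (E F : X → X → Prop) (ρ : X → X → ℝ)
    (φ : X → X) : Prop :=
  (∀ x, E x (φ x)) ∧
  (∀ x : X, relSize ρ (φ ⁻¹' {y | F y x}) {y | F y x} x ≤ 1) ∧
  (∀ x : X, ∃ y, E x y ∧ relSize ρ (φ ⁻¹' {z | F z y}) {z | F z y} y < 1)

/-- a compression of the quotient of `ρ | E | W` by the finite subequivalence relation given
by the setoid `s`, expressed via representatives. -/
def QuotCompressionOn [MeasurableSpace X] (E : X → X → Prop) (ρ : X → X → ℝ)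
    (W : Set X) (s : Setoid X) (φ : Quotient s → Quotient s) : Prop :=
  (∀ ⦃x : X⦄, x ∈ W → ∀ y : X, φ (Quotient.mk s x) = Quotient.mk s y → (E x y ∧ y ∈ W)) ∧
  (∀ ⦃x : X⦄, x ∈ W →
    relSize ρ {y | y ∈ W ∧ φ (Quotient.mk s y) = Quotient.mk s x} {y | s.r y x} x ≤ 1) ∧
  (∀ ⦃x : X⦄, x ∈ W → ∃ y, y ∈ W ∧ E x y ∧
    relSize ρ {z | z ∈ W ∧ φ (Quotient.mk s z) = Quotient.mk s y} {z | s.r z y} y < 1)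


/-- `B` has `ρ`-density at least `ε` relative to `W`. -/
def HasDensityAtLeastOn [MeasurableSpace X] (E : X → X → Prop) (ρ : X → X → ℝ)
    (B W : Set X) (ε : ℝ) : Prop :=
  ∃ F : X → X → Prop, IsFinSubequivOn E W F ∧
    ∀ x ∈ W, ENNReal.ofReal ε ≤ relSize ρ (B ∩ {y | F y x}) {y | F y x} x

/-- `B` has positive `ρ`-density relative to `W`. -/
def HasPosDensityOn [MeasurableSpace X] (E : X → X → Prop) (ρ : X → X → ℝ)
    (B W : Set X) : Prop :=
  ∃ ε : ℝ, 0 < ε ∧ HasDensityAtLeastOn E ρ B W ε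

/-- `B` has σ-positive `ρ`-density relative to `W`. -/
def HasSigmaPosDensityOn [MeasurableSpace X] (E : X → X → Prop) (ρ : X → X → ℝ)
    (B W : Set X) : Prop :=
  ∃ A : ℕ → Set X, (∀ n, MeasurableSet (A n)) ∧ (∀ n, A n ⊆ W) ∧
    (∀ n, ∀ x ∈ A n, ∀ y ∈ W, E x y → y ∈ A n) ∧ W = ⋃ n, A n ∧
    ∀ n, HasPosDensityOn E ρ (B ∩ A n) (A n)

set_option linter.unusedSectionVars false

def NSep {X : Type*} [MeasurableSpace X] (S : ℕ → Set X) : Prop :=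
  ∃ B : ℕ → Set X, (∀ n, MeasurableSet (B n)) ∧ (∀ n, S n ⊆ B n) ∧ ⋂ n, B n = ∅

lemma NSep.of_union {X : Type*} [MeasurableSpace X] (S : ℕ → Set X) (S' : ℕ → ℕ → Set X) (m : ℕ)
    (h1 : ∀ v n, n ≠ m → S n ⊆ S' v n) (h2 : S m ⊆ ⋃ v, S' v m) (h : ∀ v, NSep (S' v)) :
    NSep S := by
  choose C hC hS hE using h
  classical
  refine ⟨fun n => if n = m then ⋃ v, C v m else ⋂ v, C v n, ?_, ?_, ?_⟩
  · intro n
    by_cases hn : n = m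
    · simp only [hn, if_true]; exact MeasurableSet.iUnion fun v => hC v m
    · simp only [hn, if_false]; exact MeasurableSet.iInter fun v => hC v n
  · intro n
    by_cases hn : n = m
    · subst hn
      simp only [if_true]; exact h2.trans (iUnion_mono fun v => hS v n)
    · simp only [hn, if_false]; exact subset_iInter fun v => (h1 v n hn).trans (hS v n)
  · rw [eq_empty_iff_forall_notMem]
    intro x hx
    rw [mem_iInter] at hx
    have hm := hx m
    simp only [if_true, mem_iUnion] at hm
    obtain ⟨v, hv⟩ := hm
    have : x ∈ ⋂ n, C v n := by
      rw [mem_iInter]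
      intro n
      have hn' := hx n
      by_cases hn : n = m
      · rw [hn]; exact hv
      · simp only [hn, if_false, mem_iInter] at hn'; exact hn' v
    rw [hE v] at this
    exact this

lemma novikov_range {X : Type*} [TopologicalSpace X] [T2Space X] [MeasurableSpace X]
    [OpensMeasurableSpace X] (f : ℕ → (ℕ → ℕ) → X) (hf : ∀ n, Continuous (f n))
    (h : ⋂ n, range (f n) = ∅) : NSep (fun n => range (f n)) := by
  by_contra hns
  let S : (ℕ → ℕ) → ℕ → ℕ → Set X := fun z t n =>
    f n '' {α | ∀ k, Nat.pair n k < t → α k = z (Nat.pair n k)}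
  have hcongr : ∀ z z' t, (∀ i < t, z i = z' i) → S z t = S z' t := by
    intro z z' t hz
    funext n
    simp only [S]
    congr 1
    ext α
    simp only [mem_ofPred_eq]
    exact ⟨fun H k hk => by rw [H k hk, hz _ hk], fun H k hk => by rw [H k hk, hz _ hk]⟩
  have step : ∀ z t, ¬ NSep (S z t) → ∃ v, ¬ NSep (S (Function.update z t v) (t + 1)) := by
    intro z t
    contrapose!
    intro H
    refine NSep.of_union _ _ (Nat.unpair t).1 ?_ ?_ H
    · intro v n hn
      rintro _ ⟨α, hα, rfl⟩
      refine ⟨α, ?_, rfl⟩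
      intro k hk
      have hne : Nat.pair n k ≠ t := by
        rintro rfl
        simp at hn
      rw [Function.update_of_ne hne]
      exact hα k (by omega)
    · rintro _ ⟨α, hα, rfl⟩
      rw [mem_iUnion]
      refine ⟨α (Nat.unpair t).2, α, ?_, rfl⟩
      intro k hk
      by_cases hne : Nat.pair (Nat.unpair t).1 k = t
      · have : k = (Nat.unpair t).2 := by
          have := congrArg Nat.unpair hne
          simp only [Nat.unpair_pair] at this
          rw [← this]
        rw [hne, Function.update_self, this]
      · rw [Function.update_of_ne hne]
        exact hα k (by omega)
  choose! V hV using step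
  let Z : ℕ → (ℕ → ℕ) := fun t => Nat.rec (fun _ => 0) (fun t z => Function.update z t (V z t)) t
  have hZs : ∀ t, Z (t + 1) = Function.update (Z t) t (V (Z t) t) := fun t => rfl
  have hZ : ∀ t, ¬ NSep (S (Z t) t) := by
    intro t
    induction t with
    | zero =>
      have : S (Z 0) 0 = fun n => range (f n) := by
        funext n
        simp [S]
      rw [this]; exact hns
    | succ t ih => rw [hZs]; exact hV _ _ ih
  let z : ℕ → ℕ := fun k => Z (k + 1) k
  have hzZ : ∀ t i, i < t → Z t i = z i := by
    intro t
    induction t with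
    | zero => intro i hi; omega
    | succ t ih =>
      intro i hi
      rcases Nat.lt_succ_iff_lt_or_eq.1 hi with h' | h'
      · rw [hZs, Function.update_of_ne (by omega), ih i h']
      · subst h'; rfl
  have hz : ∀ t, ¬ NSep (S z t) := by
    intro t
    rw [← hcongr _ _ t (hzZ t)]
    exact hZ t
  let α : ℕ → ℕ → ℕ := fun n k => z (Nat.pair n k)
  have hne : ∃ n, f n (α n) ≠ f 0 (α 0) := by
    by_contra hcon
    push Not at hcon
    have : f 0 (α 0) ∈ ⋂ n, range (f n) := by
      rw [mem_iInter]
      exact fun n => ⟨α n, hcon n⟩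
    rw [h] at this
    exact this
  obtain ⟨n, hn⟩ := hne
  obtain ⟨U, W, hU, hW, hnU, h0W, hUW⟩ := t2_separation hn
  have key : ∀ (n : ℕ) (U : Set X), IsOpen U → f n (α n) ∈ U →
      ∃ t0, ∀ t ≥ t0, S z t n ⊆ U := by
    intro n U hU hnU
    have hopen : IsOpen (f n ⁻¹' U) := hU.preimage (hf n)
    obtain ⟨I, u, hI, hIu⟩ := isOpen_pi_iff.1 hopen (α n) hnU
    refine ⟨(I.sup fun k => Nat.pair n k) + 1, fun t ht => ?_⟩
    rintro _ ⟨β, hβ, rfl⟩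
    apply hIu
    intro k hk
    have : β k = α n k := by
      apply hβ
      have := Finset.le_sup (f := fun k => Nat.pair n k) hk
      omega
    rw [this]
    exact (hI k hk).2
  obtain ⟨t1, h1⟩ := key n U hU hnU
  obtain ⟨t2, h2⟩ := key 0 W hW h0W
  have hn0 : n ≠ 0 := by rintro rfl; exact hn rfl
  refine hz (max t1 t2) ⟨fun i => if i = n then U else if i = 0 then W else univ, ?_, ?_, ?_⟩
  · intro i
    dsimp only
    split_ifs
    · exact hU.measurableSet
    · exact hW.measurableSet
    · exact MeasurableSet.univ
  · intro i
    dsimp only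
    split_ifs with ha hb
    · rw [ha]; exact h1 _ (le_max_left _ _)
    · rw [hb]; exact h2 _ (le_max_right _ _)
    · exact subset_univ _
  · rw [eq_empty_iff_forall_notMem]
    intro x hx
    rw [mem_iInter] at hx
    have ha := hx n
    have hb := hx 0
    simp only [if_true, hn0.symm, if_false] at ha hb
    exact hUW.le_bot ⟨ha, hb⟩

lemma novikov {X : Type*} [TopologicalSpace X] [T2Space X] [MeasurableSpace X]
    [OpensMeasurableSpace X] (A : ℕ → Set X) (hA : ∀ n, AnalyticSet (A n))
    (h : ⋂ n, A n = ∅) : NSep A := by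
  by_cases hem : ∃ n, A n = ∅
  · obtain ⟨n, hn⟩ := hem
    classical
    refine ⟨fun i => if i = n then ∅ else univ, ?_, ?_, ?_⟩
    · intro i; dsimp only; split_ifs
      · exact MeasurableSet.empty
      · exact MeasurableSet.univ
    · intro i; dsimp only; split_ifs with hi
      · rw [hi, hn]
      · exact subset_univ _
    · rw [eq_empty_iff_forall_notMem]
      intro x hx
      rw [mem_iInter] at hx
      simpa using hx n
  · push Not at hem
    have : ∀ n, ∃ f : (ℕ → ℕ) → X, Continuous f ∧ range f = A n := by
      intro n
      have := hA n
      rw [AnalyticSet] at this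
      rcases this with h' | h'
      · exact absurd h' (hem n).ne_empty
      · exact h'
    choose f hf hr using this
    have hA' : A = fun n => range (f n) := funext fun n => (hr n).symm
    rw [hA'] at h ⊢
    exact novikov_range f hf h


def tupSet {X : Type*} (F : X → X → Prop) (e : X → ℝ) (D : Set X) (m : ℕ) :
    Set (X × (Fin m → X)) :=
  {p | p.1 ∈ D ∧ (∀ i, F p.1 (p.2 i)) ∧ ∀ i j, i < j → e (p.2 i) < e (p.2 j)}

section tup
variable {X : Type*} [MeasurableSpace X] {F : X → X → Prop}
  {e : X → ℝ}

lemma tupSet_meas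
    (hF : MeasurableSet {p : X × X | F p.1 p.2}) (he : Measurable e)
    {D : Set X} (hD : MeasurableSet D) (m : ℕ) :
    MeasurableSet (tupSet F e D m) := by
  have h1 : MeasurableSet {p : X × (Fin m → X) | p.1 ∈ D} := measurable_fst hD
  have h2 : MeasurableSet {p : X × (Fin m → X) | ∀ i, F p.1 (p.2 i)} := by
    rw [ofPred_forall]
    refine MeasurableSet.iInter fun i => ?_
    have : Measurable (fun p : X × (Fin m → X) => (p.1, p.2 i)) := by fun_prop
    exact this hF
  have h3 : MeasurableSet {p : X × (Fin m → X) | ∀ i j, i < j → e (p.2 i) < e (p.2 j)} := by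
    simp only [ofPred_forall]
    refine MeasurableSet.iInter fun i => MeasurableSet.iInter fun j => MeasurableSet.iInter fun _ => ?_
    exact measurableSet_lt (by fun_prop) (by fun_prop)
  exact h1.inter (h2.inter h3)

lemma tup_range
    (hfin : ∀ x, {y | F x y}.Finite)
    {x : X} {m : ℕ} (hx : {y | F x y}.ncard ≤ m) {t : Fin m → X}
    (h1 : ∀ i, F x (t i)) (h2 : ∀ i j, i < j → e (t i) < e (t j)) :
    range t = {y | F x y} := by
  have hinj : Function.Injective t := by
    have : StrictMono (e ∘ t) := fun i j hij => h2 i j hij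
    exact this.injective.of_comp
  have hsub : range t ⊆ {y | F x y} := by rintro _ ⟨i, rfl⟩; exact h1 i
  refine Set.eq_of_subset_of_ncard_le hsub ?_ (hfin x)
  rw [← image_univ, ncard_image_of_injective _ hinj]
  simpa using hx

lemma tup_unique {m : ℕ} {t t' : Fin m → X} (hei : Function.Injective e)
    (h2 : ∀ i j, i < j → e (t i) < e (t j)) (h2' : ∀ i j, i < j → e (t' i) < e (t' j))
    (hr : range t = range t') : t = t' := by
  have a : StrictMono (e ∘ t) := fun i j hij => h2 i j hij
  have b : StrictMono (e ∘ t') := fun i j hij => h2' i j hij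
  have : e ∘ t = e ∘ t' := by
    apply (StrictMono.range_inj a b).1
    rw [range_comp, range_comp, hr]
  funext i
  exact hei (congrFun this i)

lemma tupSet_injOn
    (hfin : ∀ x, {y | F x y}.Finite) (hei : Function.Injective e)
    {D : Set X} {m : ℕ} (hm : ∀ x ∈ D, {y | F x y}.ncard ≤ m) :
    InjOn Prod.fst (tupSet F e D m) := by
  rintro ⟨x, t⟩ ⟨hx, h1, h2⟩ ⟨x', t'⟩ ⟨hx', h1', h2'⟩ hxx
  dsimp only at *
  subst hxx
  congr 1
  apply tup_unique hei h2 h2'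
  rw [tup_range hfin (hm x hx) h1 h2, tup_range hfin (hm x hx) h1' h2']

lemma tupSet_image
    (hfin : ∀ x, {y | F x y}.Finite) (hei : Function.Injective e)
    {D : Set X} {m : ℕ} :
    Prod.fst '' (tupSet F e D m) = D ∩ {x | m ≤ {y | F x y}.ncard} := by
  ext x
  constructor
  · rintro ⟨⟨x, t⟩, ⟨hx, h1, h2⟩, rfl⟩
    refine ⟨hx, ?_⟩
    have hinj : Function.Injective t := by
      have : StrictMono (e ∘ t) := fun i j hij => h2 i j hij
      exact this.injective.of_comp
    have hsub : range t ⊆ {y | F x y} := by rintro _ ⟨i, rfl⟩; exact h1 i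
    have := Set.ncard_le_ncard hsub (hfin x)
    rw [← image_univ, ncard_image_of_injective _ hinj] at this
    simpa using this
  · rintro ⟨hx, hc⟩
    have hfi : (e '' {y | F x y}).Finite := (hfin x).image e
    have hcard : m ≤ hfi.toFinset.card := by
      rw [← Set.ncard_eq_toFinset_card _ hfi, ncard_image_of_injective _ hei]
      exact hc
    let o := Finset.orderEmbOfCardLe hfi.toFinset hcard
    have ho : ∀ i, ∃ y, F x y ∧ e y = o i := by
      intro i
      have := Finset.orderEmbOfCardLe_mem hfi.toFinset hcard i
      rw [Finite.mem_toFinset] at this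
      exact this
    choose t h1 h2 using ho
    refine ⟨⟨x, t⟩, ⟨hx, h1, ?_⟩, rfl⟩
    intro i j hij
    dsimp only
    rw [h2, h2]
    exact o.strictMono hij

lemma meas_card_aux
    (hF : MeasurableSet {p : X × X | F p.1 p.2}) (hfin : ∀ x, {y | F x y}.Finite) (he : Measurable e) (hei : Function.Injective e)
    [StandardBorelSpace X] (m : ℕ) : ∀ (D : Set X), MeasurableSet D →
    (∀ x ∈ D, {y | F x y}.ncard ≤ m) → ∀ k, MeasurableSet (D ∩ {x | {y | F x y}.ncard = k}) := by
  induction m with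
  | zero =>
    intro D hD hm k
    by_cases hk : k = 0
    · convert hD using 1
      ext x
      simp only [mem_inter_iff, mem_ofPred_eq, and_iff_left_iff_imp]
      intro hx
      have := hm x hx
      omega
    · convert MeasurableSet.empty using 1
      rw [eq_empty_iff_forall_notMem]
      rintro x ⟨hx, hx'⟩
      have := hm x hx
      simp only [mem_ofPred_eq] at hx'
      omega
  | succ m ih =>
    intro D hD hm k
    have hD' : MeasurableSet (D ∩ {x | m + 1 ≤ {y | F x y}.ncard}) := by
      rw [← tupSet_image hfin hei]
      exact (tupSet_meas hF he hD _).image_of_measurable_injOn measurable_fst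
        (tupSet_injOn hfin hei hm)
    by_cases hk : k = m + 1
    · convert hD' using 1
      ext x
      simp only [mem_inter_iff, mem_ofPred_eq]
      constructor
      · rintro ⟨a, b⟩; exact ⟨a, by omega⟩
      · rintro ⟨a, b⟩; have := hm x a; exact ⟨a, by omega⟩
    · convert ih (D \ (D ∩ {x | m + 1 ≤ {y | F x y}.ncard})) (hD.diff hD') ?_ k using 1
      · ext x
        simp only [mem_inter_iff, mem_ofPred_eq, mem_sdiff]
        constructor
        · rintro ⟨a, b⟩
          have := hm x a
          exact ⟨⟨a, fun h => by omega⟩, b⟩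
        · rintro ⟨⟨a, _⟩, b⟩; exact ⟨a, b⟩
      · rintro x ⟨hx, hx'⟩
        by_contra hcon
        exact hx' ⟨hx, by simp only [mem_ofPred_eq]; omega⟩

lemma meas_card
    (hF : MeasurableSet {p : X × X | F p.1 p.2}) (hfin : ∀ x, {y | F x y}.Finite) (he : Measurable e) (hei : Function.Injective e)
    [StandardBorelSpace X] (k : ℕ) : MeasurableSet {x | {y | F x y}.ncard = k} := by
  let := upgradeStandardBorel X
  let A : ℕ → Set X := fun n => {x | n ≤ {y | F x y}.ncard}
  have hA : ∀ n, AnalyticSet (A n) := by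
    intro n
    have : A n = Prod.fst '' (tupSet F e univ n) := by
      rw [tupSet_image hfin hei, univ_inter]
    rw [this]
    exact (tupSet_meas hF he MeasurableSet.univ n).analyticSet_image measurable_fst
  have hAe : ⋂ n, A n = ∅ := by
    rw [eq_empty_iff_forall_notMem]
    intro x hx
    rw [mem_iInter] at hx
    have := hx ({y | F x y}.ncard + 1)
    simp only [A, mem_ofPred_eq] at this
    omega
  obtain ⟨C, hC, hAC, hCe⟩ := novikov A hA hAe
  have : {x | {y | F x y}.ncard = k} = ⋃ n, ((C n)ᶜ ∩ {x | {y | F x y}.ncard = k}) := by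
    rw [← iUnion_inter, ← compl_iInter, hCe, compl_empty, univ_inter]
  rw [this]
  refine MeasurableSet.iUnion fun n => meas_card_aux hF hfin he hei n _ (hC n).compl ?_ k
  intro x hx
  by_contra hcon
  exact hx (hAC n (by simp only [A, mem_ofPred_eq]; omega))

lemma exists_enum
    (hF : MeasurableSet {p : X × X | F p.1 p.2}) (hfin : ∀ x, {y | F x y}.Finite) (he : Measurable e) (hei : Function.Injective e)
    [StandardBorelSpace X] (m : ℕ) : ∃ N : X → (Fin m → X), Measurable N ∧
    ∀ x, {y | F x y}.ncard = m →
      range (N x) = {y | F x y} ∧ ∀ i j, i < j → e (N x i) < e (N x j) := by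
  rcases isEmpty_or_nonempty X with hX | hX
  · exact ⟨fun x => isEmptyElim x, measurable_of_empty _, fun x => isEmptyElim x⟩
  set D := {x | {y | F x y}.ncard = m} with hD
  have hDm : MeasurableSet D := meas_card hF hfin he hei m
  have hle : ∀ x ∈ D, {y | F x y}.ncard ≤ m := fun x hx => le_of_eq hx
  have hS := tupSet_meas hF he hDm m
  have := hS.standardBorel
  have hemb : MeasurableEmbedding (fun p : tupSet F e D m => p.1.1) := by
    apply Measurable.measurableEmbedding
    · exact measurable_fst.comp measurable_subtype_coe
    · intro p q hpq
      exact Subtype.ext (tupSet_injOn hfin hei hle p.2 q.2 hpq)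
  obtain ⟨N, hN, hNe⟩ := hemb.exists_measurable_extend
    (g := fun p : tupSet F e D m => p.1.2) (measurable_snd.comp measurable_subtype_coe)
    (fun _ => inferInstance)
  refine ⟨N, hN, fun x hx => ?_⟩
  have hxim : x ∈ Prod.fst '' (tupSet F e D m) := by
    rw [tupSet_image hfin hei]
    exact ⟨hx, le_of_eq hx.symm⟩
  obtain ⟨⟨x', t⟩, hp, rfl⟩ := hxim
  have hNt : N x' = t := congrFun hNe ⟨(x', t), hp⟩
  simp only [hNt]
  exact ⟨tup_range hfin (le_of_eq hx) hp.2.1 hp.2.2, hp.2.2⟩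

end tup

lemma exists_pieces {X : Type*} [MeasurableSpace X] [StandardBorelSpace X] {F : X → X → Prop}
    (hFe : Equivalence F)
    (hF : MeasurableSet {p : X × X | F p.1 p.2}) (hfin : ∀ x, {y | F x y}.Finite) :
    ∃ (ι : Type) (_ : Countable ι) (σ : ι ≃ ι) (D : ι → Set X) (g : ι → X → X),
      (∀ i, σ (σ i) = i) ∧ (∀ i, MeasurableSet (D i)) ∧ (∀ i, Measurable (g i)) ∧
      (∀ i, ∀ x ∈ D i, F x (g i x)) ∧
      (∀ i, ∀ x ∈ D i, g i x ∈ D (σ i) ∧ g (σ i) (g i x) = x) ∧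
      (∀ x y, F x y → ∃ i, x ∈ D i ∧ g i x = y) ∧
      (∀ x i j, x ∈ D i → x ∈ D j → g i x = g j x → i = j) := by
  obtain ⟨e, he⟩ := exists_measurableEmbedding_real X
  have hem := he.measurable
  have hei := he.injective
  choose N hN hNx using exists_enum hF hfin hem hei
  have hcl : ∀ x y, F x y → {z | F x z} = {z | F y z} := by
    intro x y hxy
    ext z
    exact ⟨fun h => hFe.trans (hFe.symm hxy) h, fun h => hFe.trans hxy h⟩
  have hNinv : ∀ m x y, {z | F x z}.ncard = m → F x y → N m x = N m y := by
    intro m x y hm hxy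
    have hm' : {z | F y z}.ncard = m := by rw [← hcl x y hxy]; exact hm
    apply tup_unique hei (hNx m x hm).2 (hNx m y hm').2
    rw [(hNx m x hm).1, (hNx m y hm').1, hcl x y hxy]
  have hNF : ∀ m x, {z | F x z}.ncard = m → ∀ k, F x (N m x k) := by
    intro m x hm k
    have : N m x k ∈ range (N m x) := ⟨k, rfl⟩
    rw [(hNx m x hm).1] at this
    exact this
  have hNi : ∀ m x, {z | F x z}.ncard = m → Function.Injective (N m x) := by
    intro m x hm
    have : StrictMono (e ∘ N m x) := fun i j hij => (hNx m x hm).2 i j hij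
    exact this.injective.of_comp
  let s : (Σ m : ℕ, Fin m × Fin m) → (Σ m : ℕ, Fin m × Fin m) := fun i => ⟨i.1, i.2.2, i.2.1⟩
  have hs : Function.Involutive s := fun i => rfl
  refine ⟨Σ m : ℕ, Fin m × Fin m, inferInstance, hs.toPerm,
    fun i => {x | {z | F x z}.ncard = i.1} ∩ {x | N i.1 x i.2.1 = x},
    fun i x => N i.1 x i.2.2, fun i => rfl, ?_, ?_, ?_, ?_, ?_, ?_⟩
  · intro i
    refine (meas_card hF hfin hem hei i.1).inter ?_
    exact measurableSet_eq_fun ((measurable_pi_apply _).comp (hN i.1)) measurable_id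
  · intro i
    exact (measurable_pi_apply _).comp (hN i.1)
  · rintro i x ⟨hx, -⟩
    exact hNF _ _ hx _
  · rintro ⟨m, j, k⟩ x ⟨hx, hx'⟩
    dsimp only at hx hx'
    have hFx := hNF m x hx k
    have hinv := hNinv m x _ hx hFx
    refine ⟨⟨?_, ?_⟩, ?_⟩
    · change {z | F (N m x k) z}.ncard = m
      rw [← hcl _ _ hFx]; exact hx
    · change N m (N m x k) k = N m x k
      rw [← hinv]
    · change N m (N m x k) j = x
      rw [← hinv]; exact hx'
  · intro x y hxy
    have hr := (hNx _ x rfl).1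
    have hx : x ∈ range (N {y | F x y}.ncard x) := by rw [hr]; exact hFe.refl x
    have hy : y ∈ range (N {y | F x y}.ncard x) := by rw [hr]; exact hxy
    obtain ⟨j, hj⟩ := hx
    obtain ⟨k, hk⟩ := hy
    exact ⟨⟨_, j, k⟩, ⟨rfl, hj⟩, hk⟩
  · rintro x ⟨m, j, k⟩ ⟨m', j', k'⟩ ⟨h1, h2⟩ ⟨h1', h2'⟩ h3
    dsimp only [mem_ofPred_eq] at h1 h2 h1' h2' h3
    have hmm : m = m' := by rw [← h1]; exact h1'
    subst hmm
    have hj : j = j' := hNi m x h1 (by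
      have a : N m x j = x := h2
      have b : N m x j' = x := h2'
      rw [a, b])
    have hk : k = k' := hNi m x h1 h3
    rw [hj, hk]

/-- Transport along a partial injection whose domain and range are disjoint. -/
lemma transport_disj {X : Type*} [MeasurableSpace X]
    {E : X → X → Prop} (hEe : Equivalence E) {ρ : X → X → ℝ} {B : Set X} {μ : Measure X}
    (hμinv : ∀ T : X ≃ᵐ X, (∀ x ∈ B, T x ∈ B ∧ E (T x) x) → (∀ x ∉ B, T x = x) →
      ∀ A : Set X, MeasurableSet A → A ⊆ B →
        μ (T '' A) = ∫⁻ x in A, ENNReal.ofReal (ρ (T x) x) ∂μ)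
    {θ θ' : X → X} (hθ : Measurable θ) (hθ' : Measurable θ') {D D' : Set X}
    (hD : MeasurableSet D) (hD' : MeasurableSet D')
    (h1 : ∀ x ∈ D, θ x ∈ D' ∧ θ' (θ x) = x) (h2 : ∀ x ∈ D', θ' x ∈ D ∧ θ (θ' x) = x)
    (hDB : D ⊆ B) (hDB' : D' ⊆ B) (hE : ∀ x ∈ D, E (θ x) x) (hdisj : Disjoint D D') :
    μ D' = ∫⁻ x in D, ENNReal.ofReal (ρ (θ x) x) ∂μ := by
  classical
  let t : X → X := fun x => if x ∈ D then θ x else if x ∈ D' then θ' x else x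
  have tD : ∀ x ∈ D, t x = θ x := fun x hx => by simp [t, hx]
  have tD' : ∀ x ∈ D', t x = θ' x := fun x hx => by
    have : x ∉ D := fun h => hdisj.le_bot ⟨h, hx⟩
    simp [t, hx, this]
  have tn : ∀ x, x ∉ D → x ∉ D' → t x = x := fun x h h' => by simp [t, h, h']
  have tt : ∀ x, t (t x) = x := by
    intro x
    by_cases hx : x ∈ D
    · rw [tD x hx, tD' _ (h1 x hx).1, (h1 x hx).2]
    · by_cases hx' : x ∈ D'
      · rw [tD' x hx', tD _ (h2 x hx').1, (h2 x hx').2]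
      · rw [tn x hx hx', tn x hx hx']
  have tm : Measurable t := Measurable.ite hD hθ (Measurable.ite hD' hθ' measurable_id)
  let T : X ≃ᵐ X :=
    { toFun := t, invFun := t, left_inv := tt, right_inv := tt,
      measurable_toFun := tm, measurable_invFun := tm }
  have hT : ∀ x, T x = t x := fun x => rfl
  have := hμinv T ?_ ?_ D hD hDB
  · have him : T '' D = D' := by
      ext y
      constructor
      · rintro ⟨x, hx, rfl⟩
        rw [hT, tD x hx]; exact (h1 x hx).1
      · intro hy
        exact ⟨θ' y, (h2 y hy).1, by rw [hT, tD _ (h2 y hy).1, (h2 y hy).2]⟩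
    rw [him] at this
    rw [this]
    refine setLIntegral_congr_fun hD fun x hx => ?_
    simp only [hT, tD x hx]
  · intro x hx
    rw [hT]
    by_cases hxD : x ∈ D
    · rw [tD x hxD]; exact ⟨hDB' (h1 x hxD).1, hE x hxD⟩
    · by_cases hxD' : x ∈ D'
      · rw [tD' x hxD']
        refine ⟨hDB (h2 x hxD').1, ?_⟩
        have := hE _ (h2 x hxD').1
        rw [(h2 x hxD').2] at this
        exact hEe.symm this
      · rw [tn x hxD hxD']; exact ⟨hx, hEe.refl x⟩
  · intro x hx
    rw [hT]
    exact tn x (fun h => hx (hDB h)) (fun h => hx (hDB' h))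

lemma transport_measure {X : Type*} [MeasurableSpace X] [StandardBorelSpace X]
    {E : X → X → Prop} (hEe : Equivalence E) {ρ : X → X → ℝ}
    (hρm : Measurable (fun p : X × X => ρ p.1 p.2)) (hρ1 : ∀ x, ρ x x = 1)
    {B : Set X} {μ : Measure X}
    (hμinv : ∀ T : X ≃ᵐ X, (∀ x ∈ B, T x ∈ B ∧ E (T x) x) → (∀ x ∉ B, T x = x) →
      ∀ A : Set X, MeasurableSet A → A ⊆ B →
        μ (T '' A) = ∫⁻ x in A, ENNReal.ofReal (ρ (T x) x) ∂μ)
    {θ θ' : X → X} (hθ : Measurable θ) (hθ' : Measurable θ') {D D' : Set X}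
    (hD : MeasurableSet D) (hD' : MeasurableSet D')
    (h1 : ∀ x ∈ D, θ x ∈ D' ∧ θ' (θ x) = x) (h2 : ∀ x ∈ D', θ' x ∈ D ∧ θ (θ' x) = x)
    (hDB : D ⊆ B) (hDB' : D' ⊆ B) (hE : ∀ x ∈ D, E (θ x) x) :
    (μ.restrict D').map θ' =
      (μ.restrict D).withDensity (fun x => ENNReal.ofReal (ρ (θ x) x)) := by
  obtain ⟨U, hU, hUs⟩ := exists_seq_separating X (p := MeasurableSet) MeasurableSet.univ univ
  let s : Option (ℕ × Bool) → Set X := fun o => match o with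
    | none => {x | θ x = x}
    | some (n, true) => {x | x ∈ U n ∧ θ x ∉ U n}
    | some (n, false) => {x | x ∉ U n ∧ θ x ∈ U n}
  have hsm : ∀ o, MeasurableSet (s o) := by
    rintro (_ | ⟨n, _ | _⟩)
    · exact measurableSet_eq_fun hθ measurable_id
    · exact (hU n).compl.inter (hθ (hU n))
    · exact (hU n).inter (hθ (hU n)).compl
  have hcov : ⋃ o, s o = univ := by
    rw [eq_univ_iff_forall]
    intro x
    rw [mem_iUnion]
    by_cases hx : θ x = x
    · exact ⟨none, hx⟩
    · have : ∃ n, ¬ (x ∈ U n ↔ θ x ∈ U n) := by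
        by_contra hcon
        push Not at hcon
        exact hx (hUs x (mem_univ _) (θ x) (mem_univ _) hcon).symm
      obtain ⟨n, hn⟩ := this
      by_cases hxn : x ∈ U n
      · exact ⟨some (n, true), hxn, fun h => hn ⟨fun _ => h, fun _ => hxn⟩⟩
      · refine ⟨some (n, false), hxn, ?_⟩
        by_contra h
        exact hn ⟨fun h' => absurd h' hxn, fun h' => absurd h' h⟩
  rw [← Measure.restrict_univ (μ := (μ.restrict D').map θ'),
    ← Measure.restrict_univ (μ := (μ.restrict D).withDensity _), ← hcov,
    Measure.restrict_iUnion_congr]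
  intro o
  ext A hA
  rw [Measure.restrict_apply hA, Measure.restrict_apply hA]
  have hAs := hA.inter (hsm o)
  rw [Measure.map_apply hθ' hAs, Measure.restrict_apply (hθ' hAs),
    withDensity_apply _ hAs, Measure.restrict_restrict hAs]
  rcases o with _ | ⟨n, b⟩
  · have e1 : θ' ⁻¹' (A ∩ s none) ∩ D' = A ∩ s none ∩ D := by
      ext x
      constructor
      · rintro ⟨⟨ha, hb⟩, hc⟩
        have hb' : θ (θ' x) = θ' x := hb
        rw [(h2 x hc).2] at hb'
        have hd := (h2 x hc).1
        rw [← hb'] at ha hb hd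
        exact ⟨⟨ha, hb⟩, hd⟩
      · rintro ⟨⟨ha, hb⟩, hc⟩
        have hb' : θ x = x := hb
        have hd := h1 x hc
        rw [hb'] at hd
        refine ⟨?_, hd.1⟩
        rw [mem_preimage, hd.2]
        exact ⟨ha, hb⟩
    rw [e1]
    have : ∫⁻ x in A ∩ s none ∩ D, ENNReal.ofReal (ρ (θ x) x) ∂μ = ∫⁻ x in A ∩ s none ∩ D, 1 ∂μ := by
      refine setLIntegral_congr_fun (hAs.inter hD) fun x hx => ?_
      have : θ x = x := hx.1.2
      simp only [this, hρ1, ENNReal.ofReal_one]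
    rw [this, setLIntegral_one]
  · refine transport_disj hEe hμinv hθ hθ' (hAs.inter hD) ((hθ' hAs).inter hD') ?_ ?_
      (fun x hx => hDB hx.2) (fun x hx => hDB' hx.2) (fun x hx => hE x hx.2) ?_
    · intro x hx
      have := h1 x hx.2
      refine ⟨⟨?_, this.1⟩, this.2⟩
      rw [mem_preimage, this.2]; exact hx.1
    · intro x hx
      have := h2 x hx.2
      exact ⟨⟨hx.1, this.1⟩, this.2⟩
    · rw [Set.disjoint_left]
      rintro x ⟨⟨-, hx⟩, -⟩ ⟨⟨-, hx'⟩, hxD⟩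
      have := (h2 x hxD).2
      cases b
      · have a1 : x ∉ U n := hx.1
        have a2 : θ (θ' x) ∈ U n := hx'.2
        rw [this] at a2
        exact a1 a2
      · have a1 : x ∈ U n := hx.1
        have a2 : θ (θ' x) ∉ U n := hx'.2
        rw [this] at a2
        exact a2 a1

lemma transport_lintegral {X : Type*} [MeasurableSpace X] [StandardBorelSpace X]
    {E : X → X → Prop} (hEe : Equivalence E) {ρ : X → X → ℝ}
    (hρm : Measurable (fun p : X × X => ρ p.1 p.2)) (hρ1 : ∀ x, ρ x x = 1)
    {B : Set X} {μ : Measure X}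
    (hμinv : ∀ T : X ≃ᵐ X, (∀ x ∈ B, T x ∈ B ∧ E (T x) x) → (∀ x ∉ B, T x = x) →
      ∀ A : Set X, MeasurableSet A → A ⊆ B →
        μ (T '' A) = ∫⁻ x in A, ENNReal.ofReal (ρ (T x) x) ∂μ)
    {θ θ' : X → X} (hθ : Measurable θ) (hθ' : Measurable θ') {D D' : Set X}
    (hD : MeasurableSet D) (hD' : MeasurableSet D')
    (h1 : ∀ x ∈ D, θ x ∈ D' ∧ θ' (θ x) = x) (h2 : ∀ x ∈ D', θ' x ∈ D ∧ θ (θ' x) = x)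
    (hDB : D ⊆ B) (hDB' : D' ⊆ B) (hE : ∀ x ∈ D, E (θ x) x)
    {K : X → ℝ≥0∞} (hK : Measurable K) :
    ∫⁻ x in D, ENNReal.ofReal (ρ (θ x) x) * K x ∂μ = ∫⁻ y in D', K (θ' y) ∂μ := by
  have hm := transport_measure hEe hρm hρ1 hμinv hθ hθ' hD hD' h1 h2 hDB hDB' hE
  have hr : Measurable (fun x => ENNReal.ofReal (ρ (θ x) x)) :=
    ENNReal.measurable_ofReal.comp (hρm.comp (hθ.prodMk measurable_id))
  rw [← lintegral_map hK hθ', hm, lintegral_withDensity_eq_lintegral_mul _ hr hK]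
  rfl

lemma sum_class {X ι : Type*} {F : X → X → Prop} (hFs : ∀ x y, F x y → F y x)
    {D : ι → Set X} {g : ι → X → X}
    (hgF : ∀ i, ∀ x ∈ D i, F x (g i x))
    (hex : ∀ x y, F x y → ∃ i, x ∈ D i ∧ g i x = y)
    (huq : ∀ x i j, x ∈ D i → x ∈ D j → g i x = g j x → i = j) (φ : X → ℝ≥0∞) (x : X) :
    ∑' i, (D i).indicator 1 x * φ (g i x) = ∑' y : {y | F y x}, φ y := by
  have h1 : ∀ i, (D i).indicator (1 : X → ℝ≥0∞) x * φ (g i x)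
      = {i | x ∈ D i}.indicator (fun i => φ (g i x)) i := by
    intro i
    by_cases hi : x ∈ D i
    · simp [hi]
    · simp [hi]
  simp_rw [h1]
  rw [← tsum_subtype]
  let f : {i | x ∈ D i} → {y | F y x} := fun i => ⟨g i.1 x, hFs _ _ (hgF i.1 x i.2)⟩
  have hf : Function.Bijective f := by
    constructor
    · intro i j hij
      exact Subtype.ext (huq x i.1 j.1 i.2 j.2 (congrArg Subtype.val hij))
    · rintro ⟨y, hy⟩
      obtain ⟨i, hi, hiy⟩ := hex x y (hFs _ _ hy)
      exact ⟨⟨i, hi⟩, Subtype.ext hiy⟩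
  exact (Equiv.ofBijective f hf).tsum_eq (fun y => φ y.1)

/-- The construction of the extension, given a decomposition of `F` into partial injections. -/
lemma main_aux {X : Type*} [MeasurableSpace X] [StandardBorelSpace X]
    (E : X → X → Prop) (hEe : Equivalence E)
    (ρ : X → X → ℝ) (hρ : IsCocycle E ρ)
    (B : Set X) (hB : MeasurableSet B)
    (F : X → X → Prop) (hFe : Equivalence F) (hFE : ∀ x y, F x y → E x y)
    (hFfin : ∀ x, {y | F x y}.Finite)
    (ε : ℝ≥0∞) (hε : ε ≠ 0)
    (hdens : ∀ x, ε ≤ relSize ρ (B ∩ {y | F y x}) {y | F y x} x)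
    (μ : Measure X) (hfin : IsFiniteMeasure μ) (hsupp : μ Bᶜ = 0)
    (hμinv : ∀ T : X ≃ᵐ X, (∀ x ∈ B, T x ∈ B ∧ E (T x) x) → (∀ x ∉ B, T x = x) →
      ∀ A : Set X, MeasurableSet A → A ⊆ B →
        μ (T '' A) = ∫⁻ x in A, ENNReal.ofReal (ρ (T x) x) ∂μ)
    {ι : Type} [Countable ι] (σ : ι ≃ ι) (D : ι → Set X) (g : ι → X → X)
    (hσ : ∀ i, σ (σ i) = i) (hD : ∀ i, MeasurableSet (D i)) (hg : ∀ i, Measurable (g i))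
    (hgF : ∀ i, ∀ x ∈ D i, F x (g i x))
    (hgs : ∀ i, ∀ x ∈ D i, g i x ∈ D (σ i) ∧ g (σ i) (g i x) = x)
    (hex : ∀ x y, F x y → ∃ i, x ∈ D i ∧ g i x = y)
    (huq : ∀ x i j, x ∈ D i → x ∈ D j → g i x = g j x → i = j) :
    ∃ ν : Measure X, IsFiniteMeasure ν ∧ IsInvariant E ρ ν ∧ ν.restrict B = μ := by
  classical
  obtain ⟨hρm, hρpos, hρmul⟩ := hρ
  have hρ1 : ∀ x, ρ x x = 1 := by
    intro x
    have h1 := hρpos (hEe.refl x)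
    have h2 := hρmul (hEe.refl x) (hEe.refl x)
    nlinarith [mul_left_cancel₀ h1.ne' (show ρ x x * ρ x x = ρ x x * 1 by linarith)]
  have hFs : ∀ x y, F x y → F y x := fun x y h => hFe.symm h
  -- the cocycle with values in `ℝ≥0∞`
  obtain ⟨r, hr⟩ : ∃ r : X → X → ℝ≥0∞, ∀ x y, r x y = ENNReal.ofReal (ρ x y) :=
    ⟨_, fun _ _ => rfl⟩
  have hrm : Measurable (fun p : X × X => r p.1 p.2) := by
    simp_rw [hr]; exact ENNReal.measurable_ofReal.comp hρm
  have hrm2 : ∀ {f h : X → X}, Measurable f → Measurable h → Measurable (fun x => r (f x) (h x)) :=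
    fun hf hh => hrm.comp (hf.prodMk hh)
  have hrt : ∀ x y, r x y ≠ ∞ := fun x y => by rw [hr]; exact ENNReal.ofReal_ne_top
  have hr0 : ∀ x y, E x y → r x y ≠ 0 := fun x y h => by
    rw [hr]; exact (ENNReal.ofReal_pos.2 (hρpos h)).ne'
  have hrmul : ∀ x y z, E x y → E y z → r x y * r y z = r x z := fun x y z h h' => by
    rw [hr, hr, hr, hρmul h h', ENNReal.ofReal_mul (hρpos h).le]
  have hr1 : ∀ x y, E x y → r x y * r y x = 1 := fun x y h => by
    rw [hrmul x y x h (hEe.symm h), hr, hρ1, ENNReal.ofReal_one]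
  -- indicators
  obtain ⟨b, hb⟩ : ∃ b : X → ℝ≥0∞, b = B.indicator 1 := ⟨_, rfl⟩
  have hbm : Measurable b := by rw [hb]; exact measurable_one.indicator hB
  have hb1 : ∀ x ∈ B, b x = 1 := fun x hx => by simp [hb, hx]
  have hb0 : ∀ x, x ∉ B → b x = 0 := fun x hx => by simp [hb, hx]
  obtain ⟨d, hd⟩ : ∃ d : ι → X → ℝ≥0∞, ∀ i, d i = (D i).indicator 1 := ⟨_, fun _ => rfl⟩
  have hdm : ∀ i, Measurable (d i) := fun i => by rw [hd]; exact measurable_one.indicator (hD i)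
  have hd1 : ∀ i, ∀ x ∈ D i, d i x = 1 := fun i x hx => by simp [hd, hx]
  have hd0 : ∀ i, ∀ x, x ∉ D i → d i x = 0 := fun i x hx => by simp [hd, hx]
  have hsum : ∀ (φ : X → ℝ≥0∞) (x : X),
      ∑' i, d i x * φ (g i x) = ∑' y : {y | F y x}, φ y := by
    intro φ x
    simp_rw [hd]
    exact sum_class hFs hgF hex huq φ x
  -- the size of `B ∩ [x]_F` and of `[x]_F` relative to `x`
  obtain ⟨s, hs⟩ : ∃ s : X → ℝ≥0∞, ∀ x, s x = ∑' y : {y | F y x}, b y * r y x :=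
    ⟨_, fun _ => rfl⟩
  obtain ⟨t, ht⟩ : ∃ t : X → ℝ≥0∞, ∀ x, t x = ∑' y : {y | F y x}, r y x :=
    ⟨_, fun _ => rfl⟩
  have hss : ∀ x, s x = ∑' i, d i x * (b (g i x) * r (g i x) x) := fun x => by
    rw [hs, hsum (fun y => b y * r y x)]
  have hts : ∀ x, t x = ∑' i, d i x * r (g i x) x := fun x => by
    rw [ht, hsum (fun y => r y x)]
  have hsm : Measurable s := by
    have : s = fun x => ∑' i, d i x * (b (g i x) * r (g i x) x) := funext hss
    rw [this]
    refine Measurable.tsum fun i => ?_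
    exact (hdm i).mul ((hbm.comp (hg i)).mul (hrm2 (hg i) measurable_id))
  have hseS : ∀ x, eSize ρ (B ∩ {y | F y x}) x = s x := by
    intro x
    rw [hs, eSize, tsum_subtype (B ∩ {y | F y x}) (fun y => ENNReal.ofReal (ρ y x)),
      tsum_subtype {y | F y x} (fun y => b y * r y x)]
    refine tsum_congr fun y => ?_
    by_cases h1 : y ∈ B <;> by_cases h2 : F y x <;> simp [h1, h2, hb, hr]
  have hteS : ∀ x, eSize ρ {y | F y x} x = t x := by
    intro x
    rw [ht, eSize]
    simp_rw [hr]
  have htt : ∀ x, t x ≠ ∞ := by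
    intro x
    have : {y | F y x} = {y | F x y} := by
      ext y; exact ⟨fun h => hFs _ _ h, fun h => hFs _ _ h⟩
    have hfi : Finite {y | F y x} := by rw [this]; exact hFfin x
    have := Fintype.ofFinite {y | F y x}
    rw [ht, tsum_fintype]
    exact (ENNReal.sum_ne_top).2 fun y _ => hrt _ _
  have hst : ∀ x, s x ≤ t x := by
    intro x
    rw [hs, ht]
    refine ENNReal.tsum_le_tsum fun y => ?_
    by_cases h1 : (y : X) ∈ B
    · rw [hb1 _ h1, one_mul]
    · rw [hb0 _ h1, zero_mul]; exact bot_le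
  have hs_fin : ∀ x, s x ≠ ∞ := fun x => ne_top_of_le_ne_top (htt x) (hst x)
  have hdens' : ∀ x, ε ≤ s x / t x := by
    intro x
    have := hdens x
    rwa [relSize, hseS, hteS] at this
  have hs0 : ∀ x, s x ≠ 0 := by
    intro x h0
    have := hdens' x
    rw [h0, ENNReal.zero_div] at this
    exact hε (le_zero_iff.1 this)
  have ht0 : ∀ x, t x ≠ 0 := fun x h0 => hs0 x (le_zero_iff.1 (h0 ▸ hst x))
  have hts' : ∀ x, t x * (s x)⁻¹ ≤ ε⁻¹ := by
    intro x
    have h := hdens' x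
    rw [← ENNReal.inv_le_inv, ENNReal.inv_div (Or.inl (htt x)) (Or.inl (ht0 x))] at h
    exact h
  have hsF : ∀ x y, F x y → s y * r y x = s x := by
    intro x y hxy
    rw [← hsum (fun z => b z * r z x) x |>.trans (hs x).symm]
    rw [hsum (fun z => b z * r z x) x]
    have hc : {z | F z x} = {z | F z y} := by
      ext z
      exact ⟨fun h => hFe.trans h hxy, fun h => hFe.trans h (hFs _ _ hxy)⟩
    rw [hc, hs, ← ENNReal.tsum_mul_right]
    refine tsum_congr fun z => ?_
    rw [mul_assoc, hrmul _ _ _ (hFE _ _ z.2) (hFE _ _ (hFs _ _ hxy))]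
  have hsinv : ∀ x y, F x y → (s x)⁻¹ = r x y * (s y)⁻¹ := by
    intro x y hxy
    rw [← hsF x y hxy, ENNReal.mul_inv (Or.inl (hs0 y)) (Or.inl (hs_fin y)), mul_comm]
    congr 1
    exact (ENNReal.eq_inv_of_mul_eq_one_left (hr1 x y (hFE _ _ hxy))).symm
  have hnorm : ∀ x, ∑' i, d i x * (b (g i x) * r (g i x) x) * (s x)⁻¹ = 1 := by
    intro x
    rw [ENNReal.tsum_mul_right, ← hss, ENNReal.mul_inv_cancel (hs0 x) (hs_fin x)]
  have hsim : Measurable (fun x => (s x)⁻¹) := hsm.inv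
  have hae : ∀ᵐ x ∂μ, x ∈ B := hsupp
  -- the measure
  obtain ⟨w, hw⟩ : ∃ w : ι → X → ℝ≥0∞, ∀ i, w i = fun x => d i x * r (g i x) x * (s x)⁻¹ :=
    ⟨_, fun _ => rfl⟩
  have hwm : ∀ i, Measurable (w i) := fun i => by
    rw [hw]
    exact ((hdm i).mul (hrm2 (hg i) measurable_id)).mul hsim
  obtain ⟨ν, hν⟩ : ∃ ν : Measure X, ν = Measure.sum fun i => (μ.withDensity (w i)).map (g i) :=
    ⟨_, rfl⟩
  have hνint : ∀ φ : X → ℝ≥0∞, Measurable φ →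
      ∫⁻ y, φ y ∂ν = ∑' i, ∫⁻ x, w i x * φ (g i x) ∂μ := by
    intro φ hφ
    rw [hν, lintegral_sum_measure]
    refine tsum_congr fun i => ?_
    rw [lintegral_map hφ (hg i)]
    exact lintegral_withDensity_eq_lintegral_mul _ (hwm i) (hφ.comp (hg i))
  have hνset : ∀ A : Set X, MeasurableSet A →
      ν A = ∑' i, ∫⁻ x, w i x * A.indicator 1 (g i x) ∂μ := by
    intro A hA
    rw [← hνint _ (measurable_one.indicator hA), lintegral_indicator_one hA]
  refine ⟨ν, ⟨?_⟩, ?_, ?_⟩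
  · -- finiteness
    rw [hνset _ MeasurableSet.univ, ← lintegral_tsum fun i => by
      simpa using (hwm i).aemeasurable]
    have : ∀ x, ∑' i, w i x * (univ : Set X).indicator 1 (g i x) = t x * (s x)⁻¹ := by
      intro x
      rw [hts, ← ENNReal.tsum_mul_right]
      simp [hw]
    simp_rw [this]
    calc ∫⁻ x, t x * (s x)⁻¹ ∂μ ≤ ∫⁻ _, ε⁻¹ ∂μ := lintegral_mono hts'
      _ = ε⁻¹ * μ univ := lintegral_const _
      _ < ∞ := ENNReal.mul_lt_top (ENNReal.inv_lt_top.2 (pos_iff_ne_zero.2 hε)) (measure_lt_top _ _)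
  · -- invariance
    intro T hT A hA
    have hTA : MeasurableSet (T '' A) := (T.measurableSet_image).2 hA
    have hAT : ∀ y, (T '' A).indicator (1 : X → ℝ≥0∞) y = A.indicator 1 (T.symm y) := by
      intro y
      have : y ∈ T '' A ↔ T.symm y ∈ A := by
        constructor
        · rintro ⟨x, hx, rfl⟩; simpa using hx
        · intro h; exact ⟨_, h, by simp⟩
      by_cases h : T.symm y ∈ A
      · simp [h, this.2 h]
      · rw [indicator_of_notMem h, indicator_of_notMem (fun h' => h (this.1 h'))]
    obtain ⟨a, ha⟩ : ∃ a : X → ℝ≥0∞, a = A.indicator 1 := ⟨_, rfl⟩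
    have ham : Measurable a := by rw [ha]; exact measurable_one.indicator hA
    have ha1 : ∀ x ∈ A, a x = 1 := fun x hx => by simp [ha, hx]
    have ha0 : ∀ x, x ∉ A → a x = 0 := fun x hx => by simp [ha, hx]
    have hTm := T.measurable
    have hTsm := T.symm.measurable
    have hTE : ∀ x, E (T.symm x) x := fun x => by
      have := hT (T.symm x)
      rw [T.apply_symm_apply] at this
      exact hEe.symm this
    -- the key transport
    have key : ∀ i j, ∫⁻ x, w i x * a (T.symm (g i x)) *
          (d j (T.symm (g i x)) * (b (g j (T.symm (g i x))) *
            r (g j (T.symm (g i x))) (T.symm (g i x))) * (s (T.symm (g i x)))⁻¹) ∂μ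
        = ∫⁻ x, d (σ j) x * a (g (σ j) x) * r (T (g (σ j) x)) x * (s x)⁻¹ *
          (d (σ i) (T (g (σ j) x)) * (b (g (σ i) (T (g (σ j) x))) *
            r (g (σ i) (T (g (σ j) x))) (T (g (σ j) x))) * (s (T (g (σ j) x)))⁻¹) ∂μ := by
      intro i j
      let θ : X → X := fun x => g j (T.symm (g i x))
      let θ' : X → X := fun y => g (σ i) (T (g (σ j) y))
      have hθ : Measurable θ := (hg j).comp (hTsm.comp (hg i))
      have hθ' : Measurable θ' := (hg _).comp (hTm.comp (hg _))
      let P : Set X := {x | x ∈ B ∧ x ∈ D i ∧ T.symm (g i x) ∈ A ∧ T.symm (g i x) ∈ D j ∧ θ x ∈ B}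
      let Q : Set X := {y | y ∈ B ∧ y ∈ D (σ j) ∧ g (σ j) y ∈ A ∧ T (g (σ j) y) ∈ D (σ i) ∧
        θ' y ∈ B}
      have hP : MeasurableSet P := by
        refine hB.inter ((hD i).inter (MeasurableSet.inter ?_ (MeasurableSet.inter ?_ (hθ hB))))
        · exact (hTsm.comp (hg i)) hA
        · exact (hTsm.comp (hg i)) (hD j)
      have hQ : MeasurableSet Q := by
        refine hB.inter ((hD _).inter (MeasurableSet.inter ?_ (MeasurableSet.inter ?_ (hθ' hB))))
        · exact (hg _) hA
        · exact (hTm.comp (hg _)) (hD _)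
      have hPQ : ∀ x ∈ P, θ x ∈ Q ∧ θ' (θ x) = x := by
        rintro x ⟨h1, h2, h3, h4, h5⟩
        have e1 := hgs j _ h4
        have e2 := hgs i _ h2
        have e3 : g (σ j) (θ x) = T.symm (g i x) := e1.2
        have e4 : T (g (σ j) (θ x)) = g i x := by rw [e3, T.apply_symm_apply]
        have e5 : θ' (θ x) = x := by
          change g (σ i) (T (g (σ j) (θ x))) = x
          rw [e4]; exact e2.2
        refine ⟨⟨h5, e1.1, ?_, ?_, ?_⟩, e5⟩
        · rw [e3]; exact h3
        · rw [e4]; exact e2.1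
        · rw [e5]; exact h1
      have hQP : ∀ y ∈ Q, θ' y ∈ P ∧ θ (θ' y) = y := by
        rintro y ⟨h1, h2, h3, h4, h5⟩
        have e1 := hgs (σ i) _ h4
        have e2 := hgs (σ j) _ h2
        rw [hσ] at e1 e2
        have e3 : g i (θ' y) = T (g (σ j) y) := e1.2
        have e4 : T.symm (g i (θ' y)) = g (σ j) y := by rw [e3, T.symm_apply_apply]
        have e5 : θ (θ' y) = y := by
          change g j (T.symm (g i (θ' y))) = y
          rw [e4]; exact e2.2
        refine ⟨⟨h5, e1.1, ?_, ?_, ?_⟩, e5⟩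
        · rw [e4]; exact h3
        · rw [e4]; exact e2.1
        · rw [e5]; exact h1
      have hPE : ∀ x ∈ P, E (θ x) x := by
        rintro x ⟨h1, h2, h3, h4, h5⟩
        have e1 := hFE _ _ (hFs _ _ (hgF j _ h4))
        have e2 := hFE _ _ (hFs _ _ (hgF i _ h2))
        exact hEe.trans e1 (hEe.trans (hTE _) e2)
      let K : X → ℝ≥0∞ := fun x => r (g i x) x * (s x)⁻¹ *
        (r (θ x) (T.symm (g i x)) * (s (T.symm (g i x)))⁻¹) * r x (θ x)
      have hK : Measurable K := by
        have m1 : Measurable (fun x => T.symm (g i x)) := hTsm.comp (hg i)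
        exact (((hrm2 (hg i) measurable_id).mul hsim).mul
          ((hrm2 hθ m1).mul (hsim.comp m1))).mul (hrm2 measurable_id hθ)
      have main := transport_lintegral hEe hρm hρ1 hμinv hθ hθ' hP hQ hPQ hQP
        (fun x hx => hx.1) (fun x hx => hx.1) hPE hK
      rw [← lintegral_indicator hP, ← lintegral_indicator hQ] at main
      refine Eq.trans ?_ (main.trans ?_)
      · refine lintegral_congr_ae ?_
        filter_upwards [hae] with x hx
        by_cases hxP : x ∈ P
        · rw [indicator_of_mem hxP]
          have hEx := hPE x hxP
          obtain ⟨h1, h2, h3, h4, h5⟩ := hxP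
          have e : r (θ x) x * r x (θ x) = 1 := hr1 _ _ hEx
          have h5' : g j (T.symm (g i x)) ∈ B := h5
          rw [hw, ← hr]
          simp only [hd1 _ _ h2, ha1 _ h3, hd1 _ _ h4, hb1 _ h5', one_mul, mul_one, K]
          change _ = r (θ x) x * (_ * r x (θ x))
          rw [show ∀ u : ℝ≥0∞, r (θ x) x * (u * r x (θ x)) = u * (r (θ x) x * r x (θ x)) from
            fun u => by ring, e, mul_one]
        · rw [indicator_of_notMem hxP]
          by_cases h2 : x ∈ D i
          · by_cases h3 : T.symm (g i x) ∈ A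
            · by_cases h4 : T.symm (g i x) ∈ D j
              · by_cases h5 : θ x ∈ B
                · exact absurd ⟨hx, h2, h3, h4, h5⟩ hxP
                · have h5' : g j (T.symm (g i x)) ∉ B := h5
                  simp [hb0 _ h5']
              · simp [hd0 _ _ h4]
            · simp [ha0 _ h3]
          · simp [hw, hd0 _ _ h2]
      · refine lintegral_congr_ae ?_
        filter_upwards [hae] with y hy
        by_cases hyQ : y ∈ Q
        · rw [indicator_of_mem hyQ]
          obtain ⟨h1, h2, h3, h4, h5⟩ := hyQ
          have e1 := hgs (σ i) _ h4
          have e2 := hgs (σ j) _ h2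
          rw [hσ] at e1 e2
          have e3 : g i (θ' y) = T (g (σ j) y) := e1.2
          have e4 : T.symm (g i (θ' y)) = g (σ j) y := by rw [e3, T.symm_apply_apply]
          have e5 : θ (θ' y) = y := by
            change g j (T.symm (g i (θ' y))) = y
            rw [e4]; exact e2.2
          have h5' : g (σ i) (T (g (σ j) y)) ∈ B := h5
          have f1 : F (T (g (σ j) y)) (θ' y) := hgF _ _ h4
          have f2 : F y (g (σ j) y) := hgF _ _ h2
          have f3 : E (θ' y) y := hEe.trans (hEe.symm (hFE _ _ f1))
            (hEe.trans (hT _) (hEe.symm (hFE _ _ f2)))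
          simp only [hd1 _ _ h2, ha1 _ h3, hd1 _ _ h4, hb1 _ h5', one_mul, mul_one, K]
          rw [e4, e3, e5, ← hsinv _ _ f2]
          change _ = _ * (r (θ' y) (T (g (σ j) y)) * _)
          rw [← hsinv _ _ (hFs _ _ f1), ← hrmul _ _ _ (hFE _ _ f1) f3]
          ring
        · rw [indicator_of_notMem hyQ]
          symm
          by_cases h2 : y ∈ D (σ j)
          · by_cases h3 : g (σ j) y ∈ A
            · by_cases h4 : T (g (σ j) y) ∈ D (σ i)
              · by_cases h5 : θ' y ∈ B
                · exact absurd ⟨hy, h2, h3, h4, h5⟩ hyQ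
                · have h5' : g (σ i) (T (g (σ j) y)) ∉ B := h5
                  simp [hb0 _ h5']
              · simp [hd0 _ _ h4]
            · simp [ha0 _ h3]
          · simp [hd0 _ _ h2]
    -- measurability of the normalising factors
    have hnm : ∀ j, Measurable (fun x => d j x * (b (g j x) * r (g j x) x) * (s x)⁻¹) := fun j =>
      ((hdm j).mul ((hbm.comp (hg j)).mul (hrm2 (hg j) measurable_id))).mul hsim
    have lhs : ν (T '' A) = ∑' i, ∑' j, ∫⁻ x, w i x * a (T.symm (g i x)) *
          (d j (T.symm (g i x)) * (b (g j (T.symm (g i x))) *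
            r (g j (T.symm (g i x))) (T.symm (g i x))) * (s (T.symm (g i x)))⁻¹) ∂μ := by
      rw [hνset _ hTA]
      refine tsum_congr fun i => ?_
      rw [← lintegral_tsum]
      · refine lintegral_congr fun x => ?_
        rw [ENNReal.tsum_mul_left, hnorm, mul_one, hAT, ha]
      · intro j
        exact (((hwm i).mul (ham.comp (hTsm.comp (hg i)))).mul
          ((hnm j).comp (hTsm.comp (hg i)))).aemeasurable
    have rhs : ∫⁻ x in A, ENNReal.ofReal (ρ (T x) x) ∂ν =
        ∑' j, ∫⁻ x, d j x * a (g j x) * r (T (g j x)) x * (s x)⁻¹ ∂μ := by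
      simp_rw [← hr]
      rw [← lintegral_indicator hA, hνint _ ((show Measurable (fun x => r (T x) x) from
        hrm2 hTm measurable_id).indicator hA)]
      refine tsum_congr fun j => lintegral_congr fun x => ?_
      simp only [hw]
      by_cases h2 : x ∈ D j
      · by_cases h3 : g j x ∈ A
        · rw [indicator_of_mem h3, ha1 _ h3, hd1 _ _ h2,
            ← hrmul _ _ _ (hT (g j x)) (hFE _ _ (hFs _ _ (hgF j x h2)))]
          ring
        · rw [indicator_of_notMem h3, ha0 _ h3]; simp
      · rw [hd0 _ _ h2]; simp
    rw [lhs, rhs]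
    simp_rw [key]
    rw [ENNReal.tsum_comm, ← σ.tsum_eq (fun j => ∫⁻ x, d j x * a (g j x) * r (T (g j x)) x * (s x)⁻¹ ∂μ)]
    refine tsum_congr fun j => ?_
    rw [← lintegral_tsum]
    · refine lintegral_congr fun x => ?_
      rw [ENNReal.tsum_mul_left, σ.tsum_eq (fun i => d i (T (g (σ j) x)) *
        (b (g i (T (g (σ j) x))) * r (g i (T (g (σ j) x))) (T (g (σ j) x))) *
          (s (T (g (σ j) x)))⁻¹), hnorm, mul_one]
    · intro i
      exact (((((hdm _).mul (ham.comp (hg _))).mul (hrm2 (hTm.comp (hg _)) measurable_id)).mul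
        hsim).mul ((hnm (σ i)).comp (hTm.comp (hg _)))).aemeasurable
  · -- restriction
    ext A0 hA0
    rw [Measure.restrict_apply hA0]
    have hA : MeasurableSet (A0 ∩ B) := hA0.inter hB
    have hμA : μ A0 = μ (A0 ∩ B) := by
      refine measure_congr ?_
      filter_upwards [hae] with x hx
      exact propext ⟨fun h => ⟨h, hx⟩, fun h => h.1⟩
    rw [hμA]
    obtain ⟨A, hAdef⟩ : ∃ A, A = A0 ∩ B := ⟨_, rfl⟩
    rw [← hAdef] at hA ⊢
    have hAB : A ⊆ B := by rw [hAdef]; exact inter_subset_right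
    rw [hνset A hA]
    have key : ∀ i, ∫⁻ x, w i x * A.indicator 1 (g i x) ∂μ =
        ∫⁻ y, A.indicator 1 y * (d (σ i) y * (b (g (σ i) y) * r (g (σ i) y) y) * (s y)⁻¹) ∂μ := by
      intro i
      let P : Set X := {x | x ∈ B ∧ x ∈ D i ∧ g i x ∈ A}
      let Q : Set X := {y | y ∈ A ∧ y ∈ D (σ i) ∧ g (σ i) y ∈ B}
      have hP : MeasurableSet P := hB.inter ((hD i).inter ((hg i) hA))
      have hQ : MeasurableSet Q := hA.inter ((hD _).inter ((hg _) hB))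
      have main := transport_lintegral hEe hρm hρ1 hμinv (hg i) (hg (σ i)) hP hQ
        (fun x hx => ⟨⟨hx.2.2, (hgs i x hx.2.1).1, by rw [(hgs i x hx.2.1).2]; exact hx.1⟩,
          (hgs i x hx.2.1).2⟩)
        (fun x hx => by
          have := hgs (σ i) x hx.2.1
          rw [hσ] at this
          exact ⟨⟨hx.2.2, this.1, by rw [this.2]; exact hx.1⟩, this.2⟩)
        (fun x hx => hx.1) (fun x hx => hAB hx.1)
        (fun x hx => hFE _ _ (hFs _ _ (hgF i x hx.2.1))) hsim
      rw [← lintegral_indicator hP, ← lintegral_indicator hQ] at main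
      refine Eq.trans ?_ (main.trans ?_)
      · refine lintegral_congr_ae ?_
        filter_upwards [hae] with x hx
        by_cases hxP : x ∈ P
        · rw [indicator_of_mem hxP, hw, ← hr]
          simp [hd1 _ _ hxP.2.1, hxP.2.2]
        · rw [indicator_of_notMem hxP]
          by_cases h2 : x ∈ D i
          · have h3 : g i x ∉ A := fun h => hxP ⟨hx, h2, h⟩
            simp [h3]
          · simp [hw, hd0 _ _ h2]
      · refine lintegral_congr fun y => ?_
        by_cases hyQ : y ∈ Q
        · rw [indicator_of_mem hyQ, hsinv _ y (hFs _ _ (hgF _ _ hyQ.2.1))]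
          simp [hd1 _ _ hyQ.2.1, hyQ.1, hb1 _ hyQ.2.2]
        · rw [indicator_of_notMem hyQ]
          by_cases h2 : y ∈ D (σ i)
          · by_cases h1 : y ∈ A
            · have h3 : g (σ i) y ∉ B := fun h => hyQ ⟨h1, h2, h⟩
              simp [hb0 _ h3]
            · simp [h1]
          · simp [hd0 _ _ h2]
    simp_rw [key]
    rw [← lintegral_tsum]
    · rw [← lintegral_indicator_one hA]
      refine lintegral_congr fun y => ?_
      rw [ENNReal.tsum_mul_left, σ.tsum_eq (fun i => d i y * (b (g i y) * r (g i y) y) * (s y)⁻¹),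
        hnorm, mul_one]
    · intro i
      exact ((measurable_one.indicator hA).mul
        (((hdm _).mul ((hbm.comp (hg _)).mul (hrm2 (hg _) measurable_id))).mul hsim)).aemeasurable

/-- If `B` has positive `ρ`-density, then every finite Borel measure on `B` invariant with
respect to the restriction of `ρ` to `E ↾ B` extends to a `ρ`-invariant finite Borel
measure on `X`. -/
theorem stmt16 [MeasurableSpace X] [StandardBorelSpace X]
    (E : X → X → Prop) (hE : IsCBER E)
    (ρ : X → X → ℝ) (hρ : IsCocycle E ρ)
    (B : Set X) (hB : MeasurableSet B)
    (hdens : HasPosDensityOn E ρ B Set.univ)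
    (μ : Measure X) (hfin : IsFiniteMeasure μ) (hsupp : μ Bᶜ = 0)
    (hμinv : ∀ T : X ≃ᵐ X, (∀ x ∈ B, T x ∈ B ∧ E (T x) x) → (∀ x ∉ B, T x = x) →
      ∀ A : Set X, MeasurableSet A → A ⊆ B →
        μ (T '' A) = ∫⁻ x in A, ENNReal.ofReal (ρ (T x) x) ∂μ) :
    ∃ ν : Measure X, IsFiniteMeasure ν ∧ IsInvariant E ρ ν ∧ ν.restrict B = μ := by
  obtain ⟨ε, hε, F, ⟨hFe, hFm, hFE, hFfin⟩, hd⟩ := hdens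
  obtain ⟨ι, _, σ, D, g, hσ, hD, hg, hgF, hgs, hex, huq⟩ := exists_pieces hFe hFm hFfin
  refine main_aux E hE.1 ρ hρ B hB F hFe ?_ hFfin (ENNReal.ofReal ε)
    (ENNReal.ofReal_pos.2 hε).ne' (fun x => hd x (mem_univ x)) μ hfin hsupp hμinv
    σ D g hσ hD hg hgF hgs hex huq
  intro x y hxy
  rcases hFE hxy with h | h
  · rw [h]; exact hE.1.refl y
  · exact h.1

end CocycleNadkarni
end

section
/- Let X be a standard Borel space, E a countable Borel equivalence relation on X, and ρ : E → (0,∞) a Borel cocycle. Then for every Borel set A ⊆ X and every real number r with 0 < r < 1, there exist an E-invariant Borel set B ⊆ X, a Borel set C ⊆ B, and a finite Borel subequivalence relation F of E restricted to C such that: ρ restricted to E restricted to the complement of B is smooth; r < |A ∩ [x]_F|^{[x]_F∖A}_ρ < 1 for all x ∈ C; and for all x ∈ B, either A ∩ [x]_E ⊆ C or [x]_E ∖ A ⊆ C. -/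
open MeasureTheory Set ENNReal

namespace CocycleNadkarni

variable {X : Type*} {Γ : Type*}

section LN

variable {Y Z : Type*}

/-- functional graph -/
def Fnl {X Y : Type*} (G : Set (X × Y)) : Prop :=
  ∀ ⦃x : X⦄ ⦃y y' : Y⦄, (x, y) ∈ G → (x, y') ∈ G → y = y'

/-- countable union of Borel functional graphs -/
def SN {X Y : Type*} [MeasurableSpace X] [MeasurableSpace Y] (N : Set (X × Y)) : Prop :=
  ∃ G : ℕ → Set (X × Y), (∀ n, MeasurableSet (G n) ∧ Fnl (G n)) ∧ N = ⋃ n, G n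

lemma SN.meas {X Y : Type*} [MeasurableSpace X] [MeasurableSpace Y] {N : Set (X × Y)}
    (h : SN N) : MeasurableSet N := by
  obtain ⟨G, hG, rfl⟩ := h
  exact MeasurableSet.iUnion fun n => (hG n).1

lemma SN.empty {X Y : Type*} [MeasurableSpace X] [MeasurableSpace Y] :
    SN (∅ : Set (X × Y)) := by
  refine ⟨fun _ => ∅, fun n => ⟨MeasurableSet.empty, ?_⟩, by simp⟩
  intro x y y' h; exact absurd h (by simp)

lemma SN.single {X Y : Type*} [MeasurableSpace X] [MeasurableSpace Y] {N : Set (X × Y)}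
    (h : MeasurableSet N) (h' : Fnl N) : SN N :=
  ⟨fun _ => N, fun _ => ⟨h, h'⟩, (iUnion_const N).symm⟩

lemma SN.iUnion {X Y ι : Type*} [MeasurableSpace X] [MeasurableSpace Y] [Countable ι]
    {N : ι → Set (X × Y)} (h : ∀ i, SN (N i)) : SN (⋃ i, N i) := by
  choose G hG hN using h
  rcases isEmpty_or_nonempty ι with hι | hι
  · simpa using SN.empty
  obtain ⟨e, he⟩ := exists_surjective_nat (ι × ℕ)
  refine ⟨fun n => G (e n).1 (e n).2, fun n => hG _ _, ?_⟩
  ext p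
  simp only [mem_iUnion, hN]
  constructor
  · rintro ⟨i, n, h⟩
    obtain ⟨k, hk⟩ := he (i, n)
    exact ⟨k, by simpa [hk] using h⟩
  · rintro ⟨k, hk⟩
    exact ⟨_, _, hk⟩

lemma SN.union {X Y : Type*} [MeasurableSpace X] [MeasurableSpace Y]
    {N M : Set (X × Y)} (h : SN N) (h' : SN M) : SN (N ∪ M) := by
  rw [union_eq_iUnion]
  apply SN.iUnion
  intro b; cases b <;> simpa

lemma analytic_fnl {X Y : Type*} [TopologicalSpace X] [PolishSpace X] [MeasurableSpace X]
    [BorelSpace X] [TopologicalSpace Y] [PolishSpace Y] [MeasurableSpace Y] [BorelSpace Y]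
    {T : Set (X × Y)} (hT : AnalyticSet T) (hf : Fnl T) :
    ∃ G, T ⊆ G ∧ MeasurableSet G ∧ Fnl G := by
  set b := TopologicalSpace.countableBasis Y with hb
  have hbc : b.Countable := TopologicalSpace.countable_countableBasis Y
  have hbb := TopologicalSpace.isBasis_countableBasis Y
  let I := {q : b × b // Disjoint (q.1 : Set Y) (q.2 : Set Y)}
  have : Countable b := hbc
  have hop : ∀ u : b, IsOpen (u : Set Y) := fun u => hbb.isOpen u.2
  have han : ∀ u : b, AnalyticSet (Prod.fst '' (T ∩ Prod.snd ⁻¹' (u : Set Y))) := by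
    intro u
    apply AnalyticSet.image_of_continuous _ continuous_fst
    have : AnalyticSet (⋂ c : Bool, cond c T (Prod.snd ⁻¹' (u : Set Y))) := by
      apply AnalyticSet.iInter
      intro c; cases c
      · exact ((hop u).preimage continuous_snd).measurableSet.analyticSet
      · exact hT
    rwa [inter_eq_iInter]
  have hsep : ∀ q : I, ∃ B : Set X, MeasurableSet B ∧
      Prod.fst '' (T ∩ Prod.snd ⁻¹' (q.1.1 : Set Y)) ⊆ B ∧
      Disjoint (Prod.fst '' (T ∩ Prod.snd ⁻¹' (q.1.2 : Set Y))) B := by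
    intro q
    obtain ⟨B, h1, h2, h3⟩ := (han q.1.1).measurablySeparable (han q.1.2) (by
      rw [Set.disjoint_left]
      rintro x ⟨⟨x1, y1⟩, ⟨h1, h1'⟩, rfl⟩ ⟨⟨x2, y2⟩, ⟨h2, h2'⟩, h⟩
      simp only at h h1' h2'
      subst h
      have := hf h1 h2
      subst this
      exact Set.disjoint_left.1 q.2 h1' h2')
    exact ⟨B, h3, h1, h2⟩
  choose B hB1 hB2 hB3 using hsep
  refine ⟨⋂ q : I, {p : X × Y | (p.2 ∈ (q.1.1 : Set Y) → p.1 ∈ B q) ∧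
    (p.2 ∈ (q.1.2 : Set Y) → p.1 ∉ B q)}, ?_, ?_, ?_⟩
  · intro p hp
    simp only [mem_iInter]
    intro q
    refine ⟨fun h => hB2 q ⟨p, ⟨hp, h⟩, rfl⟩, fun h => ?_⟩
    exact Set.disjoint_left.1 (hB3 q) ⟨p, ⟨hp, h⟩, rfl⟩
  · apply MeasurableSet.iInter
    intro q
    have m1 : MeasurableSet (q.1.1 : Set Y) := (hop _).measurableSet
    have m2 : MeasurableSet (q.1.2 : Set Y) := (hop _).measurableSet
    have e1 : MeasurableSet {p : X × Y | p.2 ∈ (q.1.1 : Set Y)} := measurable_snd m1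
    have e2 : MeasurableSet {p : X × Y | p.2 ∈ (q.1.2 : Set Y)} := measurable_snd m2
    have e3 : MeasurableSet {p : X × Y | p.1 ∈ B q} := measurable_fst (hB1 q)
    exact (e1.imp e3).inter (e2.imp e3.compl)
  · intro x y y' h h'
    by_contra hne
    obtain ⟨u, v, hu, hv, hyu, hyv, huv⟩ := t2_separation hne
    obtain ⟨u', hu', hyu', huu⟩ := hbb.exists_subset_of_mem_open hyu hu
    obtain ⟨v', hv', hyv', hvv⟩ := hbb.exists_subset_of_mem_open hyv hv
    simp only [mem_iInter] at h h'
    have a := (h ⟨(⟨u', hu'⟩, ⟨v', hv'⟩), huv.mono huu hvv⟩).1 hyu'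
    have b := (h' ⟨(⟨u', hu'⟩, ⟨v', hv'⟩), huv.mono huu hvv⟩).2 hyv'
    exact b a

/-- positivity of a configuration -/
def Pos {X Y Z κ : Type*} [MeasurableSpace X] [MeasurableSpace Y] (f : Z → X × Y)
    (O : κ → Set Z) : Prop :=
  ∀ N : Set (X × Y), SN N → ∃ x, ∀ i, ∃ z ∈ O i, (f z).1 = x ∧ f z ∉ N

lemma pos_split {X Y Z κ : Type*} [TopologicalSpace X] [PolishSpace X] [MeasurableSpace X]
    [BorelSpace X] [TopologicalSpace Y] [PolishSpace Y] [MeasurableSpace Y] [BorelSpace Y]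
    [MetricSpace Z] [CompleteSpace Z] [SecondCountableTopology Z] [Countable κ] [DecidableEq κ]
    {f : Z → X × Y} (hf : Continuous f) {O : κ → Set Z} (hO : ∀ i, IsOpen (O i))
    (hP : Pos f O) {i₀ i₁ : κ} (hne : i₀ ≠ i₁) (heq : O i₀ = O i₁) {ε : ℝ} (hε : 0 < ε) :
    ∃ U V : Set Z, IsOpen U ∧ IsOpen V ∧ closure U ⊆ O i₀ ∧ closure V ⊆ O i₀ ∧
      (∀ p ∈ U, ∀ q ∈ U, dist p q ≤ ε) ∧ (∀ p ∈ V, ∀ q ∈ V, dist p q ≤ ε) ∧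
      (∀ p ∈ U, ∀ q ∈ V, (f p).2 ≠ (f q).2) ∧
      Pos f (Function.update (Function.update O i₀ U) i₁ V) := by
  borelize Z
  set b := TopologicalSpace.countableBasis Z with hb
  have hbc : b.Countable := TopologicalSpace.countable_countableBasis Z
  have hbb := TopologicalSpace.isBasis_countableBasis Z
  have : Countable b := hbc
  by_contra hcon
  push Not at hcon
  let I := {q : b × b // closure (q.1 : Set Z) ⊆ O i₀ ∧ closure (q.2 : Set Z) ⊆ O i₀ ∧
      (∀ p ∈ (q.1 : Set Z), ∀ p' ∈ (q.1 : Set Z), dist p p' ≤ ε) ∧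
      (∀ p ∈ (q.2 : Set Z), ∀ p' ∈ (q.2 : Set Z), dist p p' ≤ ε) ∧
      (∀ p ∈ (q.1 : Set Z), ∀ p' ∈ (q.2 : Set Z), (f p).2 ≠ (f p').2)}
  have hN : ∀ q : I, ∃ N : Set (X × Y), SN N ∧ ¬ ∃ x, ∀ i,
      ∃ z ∈ Function.update (Function.update O i₀ (q.1.1 : Set Z)) i₁ (q.1.2 : Set Z) i,
      (f z).1 = x ∧ f z ∉ N := by
    intro q
    have := hcon q.1.1 q.1.2 (hbb.isOpen q.1.1.2) (hbb.isOpen q.1.2.2) q.2.1 q.2.2.1 q.2.2.2.1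
      q.2.2.2.2.1 q.2.2.2.2.2
    unfold Pos at this
    push Not at this
    obtain ⟨N, h1, h2⟩ := this
    refine ⟨N, h1, ?_⟩
    push Not
    exact h2
  choose N hSN hNN using hN
  set M := ⋃ q, N q with hM
  have hSM : SN M := SN.iUnion hSN
  have hfm : Measurable f := hf.measurable
  let Ti : κ → Set (X × Y) := fun i => {p | ∃ z ∈ O i, (f z).1 = p.1 ∧ f z ∉ M}
  have hTi : ∀ i, AnalyticSet (Ti i) := by
    intro i
    have : Ti i = (fun w : Z × Y => ((f w.1).1, w.2)) ''
        (Prod.fst ⁻¹' (O i ∩ f ⁻¹' Mᶜ)) := by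
      ext ⟨x, y⟩
      constructor
      · rintro ⟨z, h1, h2, h3⟩
        exact ⟨(z, y), ⟨h1, h3⟩, Prod.ext h2 rfl⟩
      · rintro ⟨⟨z, y'⟩, ⟨h1, h3⟩, h2⟩
        exact ⟨z, h1, by simpa using congrArg Prod.fst h2, h3⟩
    rw [this]
    apply AnalyticSet.image_of_continuous _ (by fun_prop)
    apply MeasurableSet.analyticSet
    exact measurable_fst ((hO i).measurableSet.inter (hfm hSM.meas.compl))
  have hT0 : AnalyticSet (f '' (O i₀ ∩ f ⁻¹' Mᶜ)) :=
    AnalyticSet.image_of_continuous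
      ((hO i₀).measurableSet.inter (hfm hSM.meas.compl)).analyticSet hf
  let T : Set (X × Y) := ⋂ c : Option κ, Option.casesOn c (f '' (O i₀ ∩ f ⁻¹' Mᶜ)) Ti
  have hT : AnalyticSet T := by
    apply AnalyticSet.iInter
    rintro (_ | i)
    · exact hT0
    · exact hTi i
  have hTm : ∀ p, p ∈ T ↔ p ∈ f '' (O i₀ ∩ f ⁻¹' Mᶜ) ∧ ∀ i, p ∈ Ti i := by
    intro p
    simp only [T, mem_iInter]
    constructor
    · intro h; exact ⟨h none, fun i => h (some i)⟩
    · rintro ⟨h, h'⟩ (_ | i)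
      · exact h
      · exact h' i
  have hfnl : Fnl T := by
    intro x y y' h h'
    by_contra hyy
    rw [hTm] at h h'
    obtain ⟨⟨z, ⟨hz, hzM⟩, hfz⟩, hi⟩ := h
    obtain ⟨⟨z', ⟨hz', hzM'⟩, hfz'⟩, -⟩ := h'
    obtain ⟨u, v, hu, hv, hyu, hyv, huv⟩ := t2_separation hyy
    have key : ∀ (z : Z) (u : Set Y), z ∈ O i₀ → IsOpen u → (f z).2 ∈ u → ∃ U ∈ b, z ∈ U ∧
        closure U ⊆ O i₀ ∧ (∀ p ∈ U, ∀ q ∈ U, dist p q ≤ ε) ∧ ∀ p ∈ U, (f p).2 ∈ u := by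
      intro z u hz hu hzu
      have hop : IsOpen (O i₀ ∩ (fun z => (f z).2) ⁻¹' u) :=
        (hO i₀).inter (hu.preimage (by fun_prop))
      obtain ⟨δ, hδ, hball⟩ := Metric.isOpen_iff.1 hop z ⟨hz, hzu⟩
      obtain ⟨U, hU, hzU, hUs⟩ := hbb.exists_subset_of_mem_open
        (Metric.mem_ball_self (x := z) (lt_min (half_pos hδ) (half_pos hε))) Metric.isOpen_ball
      have hcl : closure U ⊆ Metric.ball z δ := by
        refine (closure_mono hUs).trans (Metric.closure_ball_subset_closedBall.trans ?_)
        apply Metric.closedBall_subset_ball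
        have := min_le_left (δ/2) (ε/2)
        linarith
      refine ⟨U, hU, hzU, fun p hp => (hball (hcl hp)).1, ?_,
        fun p hp => (hball (hcl (subset_closure hp))).2⟩
      intro p hp q hq
      have h1 := hUs hp
      have h2 := hUs hq
      rw [Metric.mem_ball] at h1 h2
      have := min_le_right (δ/2) (ε/2)
      have := dist_triangle_right p q z
      linarith
    obtain ⟨U, hU, hzU, hU1, hU2, hU3⟩ := key z u hz hu (by rw [hfz]; exact hyu)
    obtain ⟨V, hV, hzV, hV1, hV2, hV3⟩ := key z' v hz' hv (by rw [hfz']; exact hyv)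
    let q : I := ⟨(⟨U, hU⟩, ⟨V, hV⟩), hU1, hV1, hU2, hV2, fun p hp q hq h =>
      Set.disjoint_left.1 huv (hU3 p hp) (h ▸ hV3 q hq)⟩
    apply hNN q
    refine ⟨x, fun i => ?_⟩
    have hsub : N q ⊆ M := subset_iUnion N q
    by_cases h1 : i = i₁
    · subst h1
      refine ⟨z', by simpa [q] using hzV, by rw [hfz'], fun h => hzM' (hsub h)⟩
    by_cases h0 : i = i₀
    · subst h0
      refine ⟨z, by simpa [q, Function.update_of_ne h1] using hzU, by rw [hfz],
        fun h => hzM (hsub h)⟩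
    obtain ⟨w, hw, hw1, hw2⟩ := hi i
    refine ⟨w, ?_, hw1, fun h => hw2 (hsub h)⟩
    rwa [Function.update_of_ne h1, Function.update_of_ne h0]
  obtain ⟨G, hTG, hG, hGf⟩ := analytic_fnl hT hfnl
  obtain ⟨x, hx⟩ := hP (M ∪ G) (hSM.union (SN.single hG hGf))
  obtain ⟨z, hz, hzx, hzM⟩ := hx i₀
  apply hzM
  right
  apply hTG
  rw [hTm]
  refine ⟨⟨z, ⟨hz, fun h => hzM (Or.inl h)⟩, rfl⟩, fun i => ?_⟩
  obtain ⟨w, hw, hwx, hwM⟩ := hx i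
  exact ⟨w, hw, hwx.trans hzx.symm, fun h => hwM (Or.inl h)⟩

lemma pos_double {X Y Z ι : Type*} [TopologicalSpace X] [PolishSpace X] [MeasurableSpace X]
    [BorelSpace X] [TopologicalSpace Y] [PolishSpace Y] [MeasurableSpace Y] [BorelSpace Y]
    [MetricSpace Z] [CompleteSpace Z] [SecondCountableTopology Z] [Finite ι]
    {f : Z → X × Y} (hf : Continuous f) {O : ι → Set Z} (hO : ∀ i, IsOpen (O i))
    (hP : Pos f O) {ε : ℝ} (hε : 0 < ε) :
    ∃ O' : ι × Bool → Set Z, (∀ i, IsOpen (O' i)) ∧ Pos f O' ∧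
      (∀ i, closure (O' i) ⊆ O i.1) ∧ (∀ i, ∀ p ∈ O' i, ∀ q ∈ O' i, dist p q ≤ ε) ∧
      ∀ i, ∀ p ∈ O' (i, false), ∀ q ∈ O' (i, true), (f p).2 ≠ (f q).2 := by
  classical
  have := Fintype.ofFinite ι
  have key : ∀ t : Finset ι, ∃ O' : ι × Bool → Set Z, (∀ i, IsOpen (O' i)) ∧ Pos f O' ∧
      (∀ i, i.1 ∈ t → closure (O' i) ⊆ O i.1) ∧
      (∀ i, i.1 ∈ t → ∀ p ∈ O' i, ∀ q ∈ O' i, dist p q ≤ ε) ∧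
      (∀ i ∈ t, ∀ p ∈ O' (i, false), ∀ q ∈ O' (i, true), (f p).2 ≠ (f q).2) ∧
      ∀ i, i.1 ∉ t → O' i = O i.1 := by
    intro t
    induction t using Finset.induction_on with
    | empty =>
      refine ⟨fun i => O i.1, fun i => hO _, ?_, by simp, by simp, by simp, by simp⟩
      intro N hN
      obtain ⟨x, hx⟩ := hP N hN
      exact ⟨x, fun i => hx i.1⟩
    | insert a t ha ih =>
      obtain ⟨O', h1, h2, h3, h4, h5, h6⟩ := ih
      have e0 := h6 (a, false) ha
      have e1 := h6 (a, true) ha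
      obtain ⟨U, V, hU, hV, hUc, hVc, hUd, hVd, hUV, hp⟩ :=
        pos_split hf h1 h2 (i₀ := (a, false)) (i₁ := (a, true)) (by simp) (by rw [e0, e1]) hε
      rw [e0] at hUc hVc
      have v1 : (Function.update (Function.update O' (a, false) U) (a, true) V) (a, true) = V := by
        simp
      have v0 : (Function.update (Function.update O' (a, false) U) (a, true) V) (a, false) = U := by
        simp
      have vo : ∀ i : ι × Bool, i.1 ≠ a →
          (Function.update (Function.update O' (a, false) U) (a, true) V) i = O' i := by
        intro i hi
        rw [Function.update_of_ne, Function.update_of_ne]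
        · rintro rfl; simp at hi
        · rintro rfl; simp at hi
      refine ⟨_, ?_, hp, ?_, ?_, ?_, ?_⟩
      · rintro ⟨i, c⟩
        by_cases hi : i = a
        · subst hi; cases c
          · rwa [v0]
          · rwa [v1]
        · rw [vo _ hi]; exact h1 _
      · rintro ⟨i, c⟩ hit
        by_cases hi : i = a
        · subst hi; cases c
          · rwa [v0]
          · rwa [v1]
        · rw [vo _ hi]; exact h3 _ (Finset.mem_of_mem_insert_of_ne hit hi)
      · rintro ⟨i, c⟩ hit
        by_cases hi : i = a
        · subst hi; cases c
          · rwa [v0]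
          · rwa [v1]
        · rw [vo _ hi]; exact h4 _ (Finset.mem_of_mem_insert_of_ne hit hi)
      · intro i hit
        by_cases hi : i = a
        · subst hi
          rwa [v0, v1]
        · rw [vo _ hi, vo _ hi]; exact h5 _ (Finset.mem_of_mem_insert_of_ne hit hi)
      · rintro ⟨i, c⟩ hit
        simp only [Finset.mem_insert, not_or] at hit
        rw [vo _ hit.1]
        exact h6 _ hit.2
  obtain ⟨O', h1, h2, h3, h4, h5, h6⟩ := key Finset.univ
  exact ⟨O', h1, h2, fun i => h3 i (Finset.mem_univ _), fun i => h4 i (Finset.mem_univ _),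
    fun i => h5 i (Finset.mem_univ _)⟩

lemma not_pos {X Y Z : Type*} [TopologicalSpace X] [PolishSpace X] [MeasurableSpace X]
    [BorelSpace X] [TopologicalSpace Y] [PolishSpace Y] [MeasurableSpace Y] [BorelSpace Y]
    [MetricSpace Z] [CompleteSpace Z] [SecondCountableTopology Z]
    {f : Z → X × Y} (hf : Continuous f) (hc : ∀ x, {y | (x, y) ∈ range f}.Countable)
    (hP : Pos f (fun _ : Fin 0 → Bool => (univ : Set Z))) : False := by
  classical
  let S : ℕ → Type _ := fun n => {O : (Fin n → Bool) → Set Z // (∀ i, IsOpen (O i)) ∧ Pos f O}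
  have step : ∀ n (s : S n), ∃ s' : S (n+1),
      (∀ u, closure (s'.1 u) ⊆ s.1 (Fin.init u)) ∧
      (∀ u, ∀ p ∈ s'.1 u, ∀ q ∈ s'.1 u, dist p q ≤ 1 / ((n:ℝ) + 1)) ∧
      (∀ u v : Fin (n+1) → Bool, Fin.init u = Fin.init v → u (Fin.last n) ≠ v (Fin.last n) →
        ∀ p ∈ s'.1 u, ∀ q ∈ s'.1 v, (f p).2 ≠ (f q).2) := by
    rintro n ⟨O, hO, hPO⟩
    obtain ⟨O', h1, h2, h3, h4, h5⟩ := pos_double hf hO hPO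
      (show (0:ℝ) < 1 / ((n:ℝ) + 1) by positivity)
    refine ⟨⟨fun u => O' (Fin.init u, u (Fin.last n)), fun u => h1 _, ?_⟩, fun u => h3 _,
      fun u => h4 _, ?_⟩
    · intro N hN
      obtain ⟨x, hx⟩ := h2 N hN
      exact ⟨x, fun i => hx _⟩
    · intro u v huv hne p hp q hq
      simp only at hp hq
      rw [huv] at hp
      cases hu : u (Fin.last n) <;> cases hv : v (Fin.last n)
      · simp [hu, hv] at hne
      · rw [hu] at hp; rw [hv] at hq
        exact h5 _ p hp q hq
      · rw [hu] at hp; rw [hv] at hq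
        exact (h5 _ q hq p hp).symm
      · simp [hu, hv] at hne
  choose nxt hn1 hn2 hn3 using step
  let s : ∀ n, S n := fun n => Nat.rec ⟨fun _ => univ, fun _ => isOpen_univ, hP⟩ (fun n s => nxt n s) n
  have hs : ∀ n, s (n+1) = nxt n (s n) := fun n => rfl
  let br : (ℕ → Bool) → ∀ n, Fin n → Bool := fun b n i => b i
  have hbr : ∀ b n, Fin.init (br b (n+1)) = br b n := by
    intro b n; rfl
  let A : (ℕ → Bool) → ℕ → Set Z := fun b n => (s n).1 (br b n)
  have hA1 : ∀ b n, closure (A b (n+1)) ⊆ A b n := by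
    intro b n
    have := hn1 n (s n) (br b (n+1))
    rw [hbr] at this
    exact this
  have hA2 : ∀ b n, ∀ p ∈ A b (n+1), ∀ q ∈ A b (n+1), dist p q ≤ 1 / ((n:ℝ) + 1) := by
    intro b n
    exact hn2 n (s n) (br b (n+1))
  have hanti : ∀ b, Antitone (A b) := fun b =>
    antitone_nat_of_succ_le fun n => subset_closure.trans (hA1 b n)
  have hpt : ∀ n, ∃ x, ∀ u, ∃ z ∈ (s n).1 u, (f z).1 = x := by
    intro n
    obtain ⟨x, hx⟩ := (s n).2.2 ∅ SN.empty
    refine ⟨x, fun u => ?_⟩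
    obtain ⟨z, h1, h2, -⟩ := hx u
    exact ⟨z, h1, h2⟩
  choose x w hw1 hw2 using hpt
  have hlim : ∀ b, ∃ z, (∀ n, z ∈ A b n) ∧
      Filter.Tendsto (fun n => w n (br b n)) Filter.atTop (nhds z) := by
    intro b
    have hmem : ∀ n m, n ≤ m → w m (br b m) ∈ A b n := fun n m h => hanti b h (hw1 m _)
    have hcau : CauchySeq (fun n => w n (br b n)) := by
      rw [Metric.cauchySeq_iff']
      intro ε hε
      obtain ⟨n, hn⟩ := exists_nat_one_div_lt hε
      exact ⟨n+1, fun m hm => (hA2 b n _ (hmem _ _ hm) _ (hmem _ (n+1) le_rfl)).trans_lt hn⟩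
    obtain ⟨z, hz⟩ := cauchySeq_tendsto_of_complete hcau
    refine ⟨z, fun n => hA1 b n ?_, hz⟩
    apply mem_closure_of_tendsto hz
    filter_upwards [Filter.eventually_ge_atTop (n+1)] with m hm using hmem _ _ hm
  choose z hz1 hz2 using hlim
  have hx : ∀ b, Filter.Tendsto x Filter.atTop (nhds (f (z b)).1) := by
    intro b
    have : Filter.Tendsto (fun n => (f (w n (br b n))).1) Filter.atTop (nhds (f (z b)).1) :=
      ((continuous_fst.comp hf).tendsto _).comp (hz2 b)
    refine this.congr fun n => hw2 n _
  let x0 := (f (z fun _ => false)).1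
  have hx0 : ∀ b, (f (z b)).1 = x0 := fun b => tendsto_nhds_unique (hx b) (hx _)
  have hinj : Function.Injective fun b => (f (z b)).2 := by
    intro b b' h
    by_contra hne
    have hex : ∃ n, b n ≠ b' n := by
      by_contra hcon; push Not at hcon; exact hne (funext hcon)
    set n := Nat.find hex with hnn
    have hn := Nat.find_spec hex
    have hlt : ∀ m < n, b m = b' m := fun m hm => by
      have := Nat.find_min hex hm; push Not at this; exact this
    refine hn3 n (s n) (br b (n+1)) (br b' (n+1)) ?_ ?_ (z b) (hz1 b (n+1)) (z b') (hz1 b' (n+1)) h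
    · rw [hbr, hbr]; funext i; exact hlt i i.2
    · simpa [br] using hn
  have hcount : (range fun b => (f (z b)).2).Countable := by
    apply (hc x0).mono
    rintro y ⟨b, rfl⟩
    exact ⟨z b, Prod.ext (hx0 b) rfl⟩
  have := hcount.to_subtype
  have : Countable (ℕ → Bool) :=
    (Set.rangeFactorization_injective.2 hinj).countable
  obtain ⟨e, he⟩ := exists_surjective_nat (ℕ → Bool)
  obtain ⟨k, hk⟩ := he fun n => !(e n n)
  have := congrFun hk k
  simp at this

lemma lusin_novikov_cover {X Y : Type*} [MeasurableSpace X] [StandardBorelSpace X]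
    [MeasurableSpace Y] [StandardBorelSpace Y] {P : Set (X × Y)} (hP : MeasurableSet P)
    (hc : ∀ x, {y | (x, y) ∈ P}.Countable) : ∃ N, SN N ∧ P ⊆ N := by
  let := upgradeStandardBorel X
  let := upgradeStandardBorel Y
  have han := hP.analyticSet
  rw [AnalyticSet] at han
  rcases han with rfl | ⟨f, hf, rfl⟩
  · exact ⟨∅, SN.empty, le_rfl⟩
  by_contra hcon
  push Not at hcon
  let := TopologicalSpace.upgradeIsCompletelyMetrizable (ℕ → ℕ)
  refine not_pos (Z := ℕ → ℕ) hf hc ?_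
  intro N hN
  obtain ⟨_, ⟨z, rfl⟩, hz⟩ := not_subset.1 (hcon N hN)
  exact ⟨_, fun _ => ⟨z, mem_univ _, rfl, hz⟩⟩

lemma cber_functions {X : Type*} [MeasurableSpace X] [StandardBorelSpace X] {E : X → X → Prop}
    (hE : IsCBER E) : ∃ g : ℕ → X → X, (∀ n, Measurable (g n)) ∧ (∀ n x, E x (g n x)) ∧
      ∀ x y, E x y → ∃ n, g n x = y := by
  classical
  obtain ⟨N, ⟨G, hG, rfl⟩, hPN⟩ := lusin_novikov_cover hE.2.1 hE.2.2
  let H : ℕ → Set (X × X) := fun n => G n ∩ {p | E p.1 p.2}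
  have hH : ∀ n, MeasurableSet (H n) := fun n => (hG n).1.inter hE.2.1
  have hHf : ∀ n, Fnl (H n) := fun n x y y' h h' => (hG n).2 h.1 h'.1
  have hproj : ∀ n, ∀ B : Set X, MeasurableSet B →
      MeasurableSet (Prod.fst '' (H n ∩ Prod.snd ⁻¹' B)) := by
    intro n B hB
    apply ((hH n).inter (measurable_snd hB)).image_of_measurable_injOn measurable_fst
    rintro ⟨x, y⟩ ⟨h, -⟩ ⟨x', y'⟩ ⟨h', -⟩ (rfl : x = x')
    rw [hHf n h h']
  let g : ℕ → X → X := fun n x => if h : ∃ y, (x, y) ∈ H n then h.choose else x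
  have hg1 : ∀ n x y, (x, y) ∈ H n → g n x = y := by
    intro n x y h
    have hex : ∃ y, (x, y) ∈ H n := ⟨y, h⟩
    simp only [g, dif_pos hex]
    exact hHf n hex.choose_spec h
  have hg2 : ∀ n x, (¬ ∃ y, (x, y) ∈ H n) → g n x = x := by
    intro n x h
    simp only [g, dif_neg h]
  refine ⟨g, fun n => ?_, fun n x => ?_, fun x y hxy => ?_⟩
  · intro B hB
    have : g n ⁻¹' B = Prod.fst '' (H n ∩ Prod.snd ⁻¹' B) ∪
        (B \ Prod.fst '' (H n ∩ Prod.snd ⁻¹' univ)) := by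
      ext x
      by_cases hx : ∃ y, (x, y) ∈ H n
      · obtain ⟨y, hy⟩ := hx
        simp only [mem_preimage, hg1 n x y hy]
        constructor
        · intro h; exact Or.inl ⟨(x, y), ⟨hy, h⟩, rfl⟩
        · rintro (⟨⟨x', y'⟩, ⟨h1, h2⟩, (rfl : x' = x)⟩ | ⟨_, h⟩)
          · rw [hHf n hy h1]; exact h2
          · exact absurd ⟨(x, y), ⟨hy, mem_univ _⟩, rfl⟩ h
      · simp only [mem_preimage, hg2 n x hx]
        constructor
        · intro h
          refine Or.inr ⟨h, ?_⟩
          rintro ⟨⟨x', y'⟩, ⟨h1, h2⟩, (rfl : x' = x)⟩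
          exact hx ⟨_, h1⟩
        · rintro (⟨⟨x', y'⟩, ⟨h1, h2⟩, (rfl : x' = x)⟩ | ⟨h, _⟩)
          · exact absurd ⟨_, h1⟩ hx
          · exact h
    rw [this]
    exact (hproj n B hB).union (hB.diff (hproj n _ MeasurableSet.univ))
  · by_cases hx : ∃ y, (x, y) ∈ H n
    · obtain ⟨y, hy⟩ := hx
      rw [hg1 n x y hy]; exact hy.2
    · rw [hg2 n x hx]; exact hE.1.refl x
  · obtain ⟨n, hn⟩ := mem_iUnion.1 (hPN (show (x, y) ∈ {p : X × X | E p.1 p.2} from hxy))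
    exact ⟨n, hg1 n x y ⟨hn, hxy⟩⟩

end LN

section Main

/-- a sequence of Borel functions enumerating the classes of `E` -/
def Enum {X : Type*} [MeasurableSpace X] (E : X → X → Prop) (g : ℕ → X → X) : Prop :=
  (∀ n, Measurable (g n)) ∧ (∀ n x, E x (g n x)) ∧ ∀ x y, E x y → ∃ n, g n x = y

lemma meas_exists {X : Type*} [MeasurableSpace X] {E : X → X → Prop} {g : ℕ → X → X}
    (hg : Enum E g) {R : X → X → Prop} (hR : MeasurableSet {p : X × X | R p.1 p.2}) :
    MeasurableSet {x | ∃ y, E x y ∧ R x y} := by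
  have : {x | ∃ y, E x y ∧ R x y} = ⋃ n, (fun x => (x, g n x)) ⁻¹' {p : X × X | R p.1 p.2} := by
    ext x
    simp only [mem_ofPred_eq, mem_iUnion, mem_preimage]
    constructor
    · rintro ⟨y, h1, h2⟩
      obtain ⟨n, rfl⟩ := hg.2.2 x y h1
      exact ⟨n, h2⟩
    · rintro ⟨n, hn⟩
      exact ⟨_, hg.2.1 n x, hn⟩
  rw [this]
  exact MeasurableSet.iUnion fun n => (measurable_id.prodMk (hg.1 n)) hR

lemma meas_infinite {X : Type*} [MeasurableSpace X] [StandardBorelSpace X]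
    {E : X → X → Prop} {g : ℕ → X → X}
    (hg : Enum E g) {R : X → X → Prop} (hR : MeasurableSet {p : X × X | R p.1 p.2})
    (hRE : ∀ x y, R x y → E x y) :
    MeasurableSet {x | {y | R x y}.Infinite} := by
  have : {x | {y | R x y}.Infinite} = ⋂ n : ℕ, ⋃ m : ℕ,
      ((fun x => (x, g m x)) ⁻¹' {p : X × X | R p.1 p.2} ∩
        ⋂ k : Fin n, {x | g m x = g k x}ᶜ) := by
    ext x
    simp only [mem_ofPred_eq, mem_iUnion, mem_preimage, mem_iInter, mem_inter_iff, mem_compl_iff]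
    constructor
    · intro hinf n
      have hfin : (range fun k : Fin n => g k x).Finite := finite_range _
      obtain ⟨y, hy, hy'⟩ := (hinf.sdiff hfin).nonempty
      obtain ⟨m, rfl⟩ := hg.2.2 x y (hRE x y hy)
      exact ⟨m, hy, fun k h => hy' ⟨k, h.symm⟩⟩
    · intro h hfin
      have : ∃ n : ℕ, ∀ y, R x y → ∃ k < n, g k x = y := by
        choose! e he using fun y => hg.2.2 x y
        obtain ⟨b, hb⟩ := (hfin.image e).bddAbove
        refine ⟨b + 1, fun y hy => ⟨e y, ?_, he y (hRE x y hy)⟩⟩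
        have := hb (mem_image_of_mem e hy)
        omega
      obtain ⟨n, hn⟩ := this
      obtain ⟨m, hm, hm'⟩ := h n
      obtain ⟨k, hk, hk'⟩ := hn _ hm
      exact hm' ⟨k, hk⟩ hk'.symm
  rw [this]
  refine MeasurableSet.iInter fun n => MeasurableSet.iUnion fun m => MeasurableSet.inter
    ((measurable_id.prodMk (hg.1 m)) hR) (MeasurableSet.iInter fun k => ?_)
  exact (measurableSet_eq_fun (hg.1 m) (hg.1 k)).compl

lemma finite_coloring {X : Type*} [MeasurableSpace X] [StandardBorelSpace X]
    {E : X → X → Prop} {g : ℕ → X → X}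
    (hg : Enum E g) {R : X → X → Prop} (hR : MeasurableSet {p : X × X | R p.1 p.2})
    (hRE : ∀ x y, R x y → E x y) (hfin : ∀ x, {y | R x y}.Finite) :
    ∃ c : X → ℕ, Measurable c ∧ ∀ x y, x ≠ y → R x y → c x ≠ c y := by
  classical
  let := upgradeStandardBorel X
  have hbc : (insert univ (TopologicalSpace.countableBasis X)).Countable :=
    (TopologicalSpace.countable_countableBasis X).insert _
  have hbb := TopologicalSpace.isBasis_countableBasis X
  obtain ⟨U, hU⟩ := hbc.exists_eq_range (insert_nonempty _ _)
  have hUo : ∀ n, IsOpen (U n) := by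
    intro n
    have : U n ∈ range U := mem_range_self n
    rw [← hU] at this
    rcases this with h | h
    · rw [h]; exact isOpen_univ
    · exact hbb.isOpen h
  let p : X → ℕ → Prop := fun x n => x ∈ U n ∧ ¬ ∃ y, E x y ∧ (R x y ∧ y ≠ x ∧ y ∈ U n)
  have hp : ∀ x, ∃ n, p x n := by
    intro x
    have hf : ({y | R x y} \ {x}).Finite := (hfin x).sdiff
    obtain ⟨V, hV, hxV, hVs⟩ := hbb.exists_subset_of_mem_open
      (show x ∈ ({y | R x y} \ {x})ᶜ by simp) hf.isClosed.isOpen_compl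
    have : V ∈ range U := by rw [← hU]; exact Or.inr hV
    obtain ⟨n, rfl⟩ := this
    refine ⟨n, hxV, ?_⟩
    rintro ⟨y, -, h1, h2, h3⟩
    exact hVs h3 ⟨h1, h2⟩
  have hm : ∀ k, MeasurableSet {x | p x k} := by
    intro k
    refine (hUo k).measurableSet.inter (MeasurableSet.compl ?_)
    refine meas_exists (R := fun x y => R x y ∧ y ≠ x ∧ y ∈ U k) hg ?_
    refine hR.inter (MeasurableSet.inter ?_ (measurable_snd (hUo k).measurableSet))
    exact (measurableSet_eq_fun measurable_snd measurable_fst).compl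
  refine ⟨fun x => Nat.find (hp x), measurable_find hp hm, ?_⟩
  intro x y hne hxy heq
  have h1 := Nat.find_spec (hp x)
  have h2 := Nat.find_spec (hp y)
  simp only at heq
  rw [← heq] at h2
  exact h1.2 ⟨y, hRE x y hxy, hxy, hne.symm, h2.1⟩

lemma smooth_sat {X : Type*} [MeasurableSpace X] [StandardBorelSpace X]
    {E : X → X → Prop} (hE : IsCBER E) {g : ℕ → X → X}
    (hg : Enum E g) {ρ : X → X → ℝ} (hρ : IsCocycle E ρ) {W Bad : Set X}
    (hW : MeasurableSet W) (hBad : ∀ x ∈ Bad, ∃ y ∈ W, E x y)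
    {c : X → ℕ} (hc : Measurable c)
    (hcW : ∀ x y, x ∈ W → y ∈ W → x ≠ y → E x y → |Real.log (ρ x y)| < 1 → c x ≠ c y) :
    SmoothOn E ρ Bad := by
  classical
  obtain ⟨hρm, hρ0, hρ1⟩ := hρ
  have hp : ∀ x, ∃ n, g n x ∈ W ∨ ¬ ∃ m, g m x ∈ W := by
    intro x
    by_cases h : ∃ m, g m x ∈ W
    · exact h.imp fun _ => Or.inl
    · exact ⟨0, Or.inr h⟩
  have hgW : ∀ n, MeasurableSet {x | g n x ∈ W} := fun n => hg.1 n hW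
  have hnm : Measurable fun x => Nat.find (hp x) := by
    apply measurable_find hp
    intro k
    refine (hgW k).union (MeasurableSet.compl ?_)
    have : {x | ∃ m, g m x ∈ W} = ⋃ m, {x | g m x ∈ W} := by ext; simp
    change MeasurableSet {x | ∃ m, g m x ∈ W}
    rw [this]
    exact MeasurableSet.iUnion hgW
  set n : X → ℕ := fun x => Nat.find (hp x) with hn
  let φ : X → X := fun x => g (n x) x
  have hφm : Measurable φ := by
    have h1 : Measurable fun p : ℕ × X => g p.1 p.2 :=
      measurable_from_prod_countable_right fun k => hg.1 k
    exact h1.comp (hnm.prodMk measurable_id)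
  have hφE : ∀ x, E x (φ x) := fun x => hg.2.1 _ x
  have hφW : ∀ x ∈ Bad, φ x ∈ W := by
    intro x hx
    obtain ⟨y, hy, hxy⟩ := hBad x hx
    obtain ⟨m, rfl⟩ := hg.2.2 x y hxy
    rcases Nat.find_spec (hp x) with h | h
    · exact h
    · exact absurd ⟨m, hy⟩ h
  have hq : ∀ x, ∃ m, g m (φ x) = x := fun x => hg.2.2 _ _ (hE.1.symm (hφE x))
  have hqm : Measurable fun x => Nat.find (hq x) := by
    apply measurable_find hq
    intro k
    exact measurableSet_eq_fun ((hg.1 k).comp hφm) measurable_id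
  set n' : X → ℕ := fun x => Nat.find (hq x) with hn'
  have hn's : ∀ x, g (n' x) (φ x) = x := fun x => Nat.find_spec (hq x)
  let t : X → ℝ := fun x => Real.log (ρ x (φ x))
  have ht : Measurable t := Real.measurable_log.comp (hρm.comp (measurable_id.prodMk hφm))
  let k : X → ℤ := fun x => ⌊2 * t x⌋
  have hk : Measurable k := Int.measurable_floor.comp (ht.const_mul 2)
  refine ⟨Ioo (Real.exp (-(1/2))) (Real.exp (1/2)), isOpen_Ioo, ?_, ?_,
    fun x => Encodable.encode (n' x, k x, c (φ x)), ?_, ?_⟩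
  · constructor
    · rw [Real.exp_lt_one_iff]; norm_num
    · rw [Real.one_lt_exp_iff]; norm_num
  · intro s hs
    exact (Real.exp_pos _).trans hs.1
  · have : Measurable fun q : ℕ × ℤ × ℕ => Encodable.encode q := measurable_of_countable _
    exact this.comp ((hqm.prodMk (hk.prodMk (hc.comp hφm))))
  · intro x y hx hy hne hxy hU heq
    have heq := Encodable.encode_injective heq
    simp only [Prod.mk.injEq] at heq
    obtain ⟨e1, e2, e3⟩ := heq
    have hφne : φ x ≠ φ y := by
      intro h
      apply hne
      rw [← hn's x, ← hn's y, e1, h]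
    have h1 : E (φ x) x := hE.1.symm (hφE x)
    have h2 : E (φ x) (φ y) := hE.1.trans (hE.1.trans h1 hxy) (hφE y)
    refine hcW _ _ (hφW x hx) (hφW y hy) hφne h2 ?_ e3
    have a1 : ρ x (φ y) = ρ x (φ x) * ρ (φ x) (φ y) := hρ1 (hφE x) h2
    have a2 : ρ x (φ y) = ρ x y * ρ y (φ y) := hρ1 hxy (hφE y)
    have a3 : Real.log (ρ x (φ x)) + Real.log (ρ (φ x) (φ y)) =
        Real.log (ρ x y) + Real.log (ρ y (φ y)) := by
      rw [← Real.log_mul (hρ0 (hφE x)).ne' (hρ0 h2).ne', ← Real.log_mul (hρ0 hxy).ne'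
        (hρ0 (hφE y)).ne', ← a1, ← a2]
    have a4 : |2 * t x - 2 * t y| < 1 := Int.abs_sub_lt_one_of_floor_eq_floor e2
    have b1 : -(1/2) < Real.log (ρ x y) := (Real.lt_log_iff_exp_lt (hρ0 hxy)).2 hU.1
    have b2 : Real.log (ρ x y) < 1/2 := (Real.log_lt_iff_lt_exp (hρ0 hxy)).2 hU.2
    simp only [t] at a4
    rw [abs_lt] at a4 ⊢
    constructor <;> linarith [a4.1, a4.2]

lemma meas_eSize {X : Type*} [MeasurableSpace X] [StandardBorelSpace X]
    {E : X → X → Prop} {g : ℕ → X → X}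
    (hg : Enum E g) {ρ : X → X → ℝ} (hρ : Measurable fun p : X × X => ρ p.1 p.2)
    {Q : X → X → Prop} (hQ : MeasurableSet {p : X × X | Q p.1 p.2})
    (hQE : ∀ x y, Q x y → E x y) :
    Measurable fun x => eSize ρ {y | Q x y} x := by
  classical
  let s : X → Set ℕ := fun x => {n | Q x (g n x) ∧ ∀ m : Fin n, g m x ≠ g n x}
  have key : ∀ x, eSize ρ {y | Q x y} x =
      ∑' n, (s x).indicator (fun n => ENNReal.ofReal (ρ (g n x) x)) n := by
    intro x
    rw [← tsum_subtype]
    unfold eSize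
    let e : s x → {y | Q x y} := fun n => ⟨g n x, n.2.1⟩
    have he : Function.Bijective e := by
      constructor
      · rintro ⟨n, hn⟩ ⟨m, hm⟩ h
        have h : g n x = g m x := congrArg Subtype.val h
        rcases lt_trichotomy n m with h' | h' | h'
        · exact absurd h (hm.2 ⟨n, h'⟩)
        · exact Subtype.ext h'
        · exact absurd h.symm (hn.2 ⟨m, h'⟩)
      · rintro ⟨y, hy⟩
        have hex := hg.2.2 x y (hQE x y hy)
        have h1 := Nat.find_spec hex
        refine ⟨⟨Nat.find hex, ?_, ?_⟩, Subtype.ext h1⟩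
        · rw [h1]; exact hy
        · intro m hm
          rw [h1] at hm
          exact Nat.find_min hex m.2 hm
    exact ((Equiv.ofBijective e he).tsum_eq
      (fun y : {y | Q x y} => ENNReal.ofReal (ρ y x))).symm
  simp_rw [key]
  refine Measurable.tsum fun n => ?_
  have : (fun x => (s x).indicator (fun n => ENNReal.ofReal (ρ (g n x) x)) n) =
      {x | n ∈ s x}.indicator fun x => ENNReal.ofReal (ρ (g n x) x) := by
    funext x
    by_cases h : n ∈ s x
    · rw [indicator_of_mem h, indicator_of_mem (show x ∈ {x | n ∈ s x} from h)]
    · rw [indicator_of_notMem h, indicator_of_notMem (show x ∉ {x | n ∈ s x} from h)]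
  rw [this]
  refine Measurable.indicator (hρ.comp ((hg.1 n).prodMk measurable_id)).ennreal_ofReal ?_
  have : {x | n ∈ s x} = (fun x => (x, g n x)) ⁻¹' {p : X × X | Q p.1 p.2} ∩
        ⋂ k : Fin n, {x | g k x = g n x}ᶜ := by
    ext x; simp [s]
  rw [this]
  exact MeasurableSet.inter ((measurable_id.prodMk (hg.1 n)) hQ) (MeasurableSet.iInter fun k =>
    (measurableSet_eq_fun (hg.1 k) (hg.1 n)).compl)

lemma relSize_base {X : Type*} [MeasurableSpace X]
    {E : X → X → Prop} {ρ : X → X → ℝ} (hρ : IsCocycle E ρ) {Y Z : Set X}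
    {z z' : X} (hzz : E z z') (hY : ∀ y ∈ Y, E y z) (hZ : ∀ y ∈ Z, E y z) :
    relSize ρ Y Z z' = relSize ρ Y Z z := by
  have key : ∀ Y : Set X, (∀ y ∈ Y, E y z) →
      eSize ρ Y z' = eSize ρ Y z * ENNReal.ofReal (ρ z z') := by
    intro Y hY
    unfold eSize
    rw [← ENNReal.tsum_mul_right]
    refine tsum_congr fun y => ?_
    rw [hρ.2.2 (hY y y.2) hzz, ENNReal.ofReal_mul (hρ.2.1 (hY y y.2)).le]
  unfold relSize
  rw [key Y hY, key Z hZ]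
  exact ENNReal.mul_div_mul_right _ _ (by simpa using hρ.2.1 hzz) ENNReal.ofReal_ne_top

lemma pieces {X : Type*} [MeasurableSpace X] [StandardBorelSpace X]
    {E : X → X → Prop} (hE : IsCBER E) {g : ℕ → X → X} (hg : Enum E g) :
    ∃ S : ℕ → X → X → Prop, (∀ m, MeasurableSet {p : X × X | S m p.1 p.2}) ∧
      (∀ m x y, S m x y → E x y) ∧ (∀ m x, {y | S m x y}.Finite) ∧
      (∀ m x x' y, S m x y → S m x' y → x = x') ∧
      ∀ (x : X) (T : Finset X), (∀ y ∈ T, E x y) → ∃ m, ∀ y, S m x y ↔ y ∈ T := by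
  classical
  let R : List (ℕ × ℕ) → X → X → Prop := fun σ x y =>
    (∀ p ∈ σ, g p.2 (g p.1 x) = x) ∧ ∃ p ∈ σ, y = g p.1 x
  have hval : ∀ σ : List (ℕ × ℕ), MeasurableSet {x | ∀ p ∈ σ, g p.2 (g p.1 x) = x} := by
    intro σ
    have : {x | ∀ p ∈ σ, g p.2 (g p.1 x) = x} =
        ⋂ p ∈ {p | p ∈ σ}, {x | g p.2 (g p.1 x) = x} := by ext; simp
    rw [this]
    refine MeasurableSet.biInter (to_countable _) fun p _ => ?_
    exact measurableSet_eq_fun ((hg.1 _).comp (hg.1 _)) measurable_id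
  have hRm : ∀ σ, MeasurableSet {p : X × X | R σ p.1 p.2} := by
    intro σ
    refine (measurable_fst (hval σ)).inter ?_
    have : {q : X × X | ∃ p ∈ σ, q.2 = g p.1 q.1} =
        ⋃ p ∈ {p | p ∈ σ}, {q : X × X | q.2 = g p.1 q.1} := by ext; simp
    change MeasurableSet {q : X × X | ∃ p ∈ σ, q.2 = g p.1 q.1}
    rw [this]
    refine MeasurableSet.biUnion (to_countable _) fun p _ => ?_
    exact measurableSet_eq_fun measurable_snd ((hg.1 _).comp measurable_fst)
  have hRE : ∀ σ x y, R σ x y → E x y := by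
    rintro σ x y ⟨-, p, -, rfl⟩
    exact hg.2.1 _ _
  have hRf : ∀ σ x, {y | R σ x y}.Finite := by
    intro σ x
    apply (σ.map fun p => g p.1 x).finite_toSet.subset
    rintro y ⟨-, p, hp, rfl⟩
    exact List.mem_map.2 ⟨p, hp, rfl⟩
  have hK : ∀ σ, ∃ c : X → ℕ, Measurable c ∧ ∀ x x', x ≠ x' → (∃ y, R σ x y ∧ R σ x' y) →
      c x ≠ c x' := by
    intro σ
    refine finite_coloring (R := fun x x' => ∃ y, R σ x y ∧ R σ x' y) hg ?_ ?_ ?_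
    · have : {q : X × X | ∃ y, R σ q.1 y ∧ R σ q.2 y} =
        ⋃ n, (fun q : X × X => (q.1, g n q.1)) ⁻¹' {p : X × X | R σ p.1 p.2} ∩
          (fun q : X × X => (q.2, g n q.1)) ⁻¹' {p : X × X | R σ p.1 p.2} := by
        ext ⟨x, x'⟩
        simp only [mem_ofPred_eq, mem_iUnion, mem_inter_iff, mem_preimage]
        constructor
        · rintro ⟨y, h1, h2⟩
          obtain ⟨n, rfl⟩ := hg.2.2 x y (hRE _ _ _ h1)
          exact ⟨n, h1, h2⟩
        · rintro ⟨n, h1, h2⟩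
          exact ⟨_, h1, h2⟩
      rw [this]
      exact MeasurableSet.iUnion fun n => MeasurableSet.inter
        ((measurable_fst.prodMk ((hg.1 n).comp measurable_fst)) (hRm σ))
        ((measurable_snd.prodMk ((hg.1 n).comp measurable_fst)) (hRm σ))
    · rintro x x' ⟨y, h1, h2⟩
      exact hE.1.trans (hRE _ _ _ h1) (hE.1.symm (hRE _ _ _ h2))
    · intro x
      have hf : (⋃ y ∈ {y | R σ x y}, {z | z ∈ σ.map fun p => g p.2 y}).Finite :=
        (hRf σ x).biUnion fun y _ => List.finite_toSet _
      apply hf.subset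
      rintro x' ⟨y, h1, h2, p, hp, rfl⟩
      simp only [mem_iUnion]
      refine ⟨_, h1, ?_⟩
      exact List.mem_map.2 ⟨p, hp, h2 p hp⟩
  choose c hc hcc using hK
  obtain ⟨e, he⟩ := exists_surjective_nat (List (ℕ × ℕ) × ℕ)
  refine ⟨fun m x y => R (e m).1 x y ∧ c (e m).1 x = (e m).2, fun m => ?_,
    fun m x y h => hRE _ _ _ h.1, fun m x => (hRf (e m).1 x).subset fun y h => h.1,
    fun m x x' y h h' => ?_, fun x T hT => ?_⟩
  · exact (hRm _).inter (((hc _).comp measurable_fst) (measurableSet_singleton (e m).2))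
  · by_contra hne
    exact hcc _ x x' hne ⟨y, h.1, h'.1⟩ (h.2.trans h'.2.symm)
  · choose! i hi using fun y => hg.2.2 x y
    choose! i' hi' using fun y => hg.2.2 y x
    let σ := T.toList.map fun y => (i y, i' y)
    obtain ⟨m, hm⟩ := he (σ, c σ x)
    refine ⟨m, fun y => ?_⟩
    simp only [hm, and_true]
    constructor
    · rintro ⟨-, p, hp, rfl⟩
      obtain ⟨y, hy, rfl⟩ := List.mem_map.1 hp
      rw [Finset.mem_toList] at hy
      rw [hi y (hT y hy)]; exact hy
    · intro hy
      refine ⟨fun p hp => ?_, (i y, i' y), List.mem_map.2 ⟨y, Finset.mem_toList.2 hy, rfl⟩,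
        (hi y (hT y hy)).symm⟩
      obtain ⟨y, hy, rfl⟩ := List.mem_map.1 hp
      rw [Finset.mem_toList] at hy
      simp only
      rw [hi y (hT y hy), hi' y (hE.1.symm (hT y hy))]

lemma greedy {X : Type*} [MeasurableSpace X]
    {E : X → X → Prop} (hE : IsCBER E) {g : ℕ → X → X} (hg : Enum E g)
    {S : ℕ → X → X → Prop} (hSm : ∀ m, MeasurableSet {p : X × X | S m p.1 p.2})
    (hSE : ∀ m x y, S m x y → E x y)
    (hSd : ∀ m x x' y, S m x y → S m x' y → x = x')
    {Good : ℕ → Set X} (hG : ∀ m, MeasurableSet (Good m)) :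
    ∃ D : ℕ → Set X, (∀ m, MeasurableSet (D m)) ∧ (∀ m, D m ⊆ Good m) ∧
      (∀ m m' x x' y, x ∈ D m → x' ∈ D m' → S m x y → S m' x' y → m = m' ∧ x = x') ∧
      ∀ m, ∀ x ∈ Good m, x ∈ D m ∨ ∃ y, S m x y ∧ ∃ m', ∃ x' ∈ D m', S m' x' y := by
  classical
  let d : ℕ → Set X → Set X := fun m C => Good m \ {x | ∃ y, E x y ∧ (S m x y ∧ y ∈ C)}
  let nx : ℕ → Set X → Set X := fun m C => C ∪ {y | ∃ x, E y x ∧ (x ∈ d m C ∧ S m x y)}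
  let C : ℕ → Set X := fun n => Nat.rec ∅ nx n
  have hC1 : ∀ n, C (n+1) = nx n (C n) := fun n => rfl
  have hdm : ∀ m C, MeasurableSet C → MeasurableSet (d m C) := by
    intro m C hC
    refine (hG m).diff (meas_exists (R := fun x y => S m x y ∧ y ∈ C) hg ?_)
    exact (hSm m).inter (measurable_snd hC)
  have hCm : ∀ n, MeasurableSet (C n) := by
    intro n
    induction n with
    | zero => exact MeasurableSet.empty
    | succ n ih =>
      rw [hC1]
      refine ih.union (meas_exists (R := fun y x => x ∈ d n (C n) ∧ S n x y) hg ?_)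
      exact (measurable_snd (hdm n _ ih)).inter (measurable_swap (hSm n))
  have hmono : Monotone C := monotone_nat_of_le_succ fun n => subset_union_left
  have hin : ∀ m x y, x ∈ d m (C m) → S m x y → y ∈ C (m+1) := by
    intro m x y hx hy
    rw [hC1]
    exact Or.inr ⟨x, hE.1.symm (hSE _ _ _ hy), hx, hy⟩
  have hout : ∀ m x y, x ∈ d m (C m) → S m x y → y ∉ C m := by
    intro m x y hx hy hyC
    exact hx.2 ⟨y, hSE _ _ _ hy, hy, hyC⟩
  have hCc : ∀ n y, y ∈ C n → ∃ m, ∃ x ∈ d m (C m), S m x y := by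
    intro n y
    induction n with
    | zero => intro h; exact absurd h (by simp [C])
    | succ n ih =>
      rw [hC1]
      rintro (h | ⟨x, -, h1, h2⟩)
      · exact ih h
      · exact ⟨n, x, h1, h2⟩
  refine ⟨fun m => d m (C m), fun m => hdm m _ (hCm m), fun m x hx => hx.1, ?_, ?_⟩
  · intro m m' x x' y hx hx' hy hy'
    have : m = m' := by
      rcases lt_trichotomy m m' with h | h | h
      · exact absurd (hmono (Nat.succ_le_of_lt h) (hin m x y hx hy)) (hout m' x' y hx' hy')
      · exact h
      · exact absurd (hmono (Nat.succ_le_of_lt h) (hin m' x' y hx' hy')) (hout m x y hx hy)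
    subst this
    exact ⟨rfl, hSd _ _ _ _ hy hy'⟩
  · intro m x hx
    rcases Classical.em (∃ y : X, E x y ∧ (S m x y ∧ y ∈ C m)) with h | h
    · obtain ⟨y, -, h1, h2⟩ := h
      exact Or.inr ⟨y, h1, hCc m y h2⟩
    · exact Or.inl ⟨hx, h⟩

lemma balance {α : Type*} {a : α → ℝ} {IA IN : Set α} (hA : IA.Infinite) (hN : IN.Infinite)
    {α₀ α₁ β r : ℝ} (h0 : 0 < α₀) (hβ : 0 < β) (hr1 : r < 1)
    (ha : ∀ p ∈ IA, α₀ ≤ a p ∧ a p ≤ α₁) (hb : ∀ p ∈ IN, β ≤ a p) :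
    ∃ sA sN : Finset α, (sA : Set α) ⊆ IA ∧ (sN : Set α) ⊆ IN ∧ 0 < ∑ p ∈ sN, a p ∧
      r * ∑ p ∈ sN, a p < ∑ p ∈ sA, a p ∧ ∑ p ∈ sA, a p < ∑ p ∈ sN, a p := by
  classical
  have large : ∀ (I : Set α) (β : ℝ), I.Infinite → 0 < β → (∀ p ∈ I, β ≤ a p) → ∀ K : ℝ,
      ∃ s : Finset α, (s : Set α) ⊆ I ∧ K < ∑ p ∈ s, a p := by
    intro I β hI hβ hb K
    obtain ⟨n, hn⟩ := exists_nat_gt (K / β)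
    obtain ⟨s, hs, hsn⟩ := hI.exists_subset_card_eq n
    refine ⟨s, hs, ?_⟩
    have : (n:ℝ) * β ≤ ∑ p ∈ s, a p := by
      rw [← hsn, ← nsmul_eq_mul]
      exact Finset.card_nsmul_le_sum s a β fun p hp => hb p (hs hp)
    rw [div_lt_iff₀ hβ] at hn
    linarith
  obtain ⟨p0, hp0⟩ := hA.nonempty
  have hα1 : 0 < α₁ := h0.trans_le ((ha p0 hp0).1.trans (ha p0 hp0).2)
  have h1r : 0 < 1 - r := by linarith
  obtain ⟨sN, hsN, hK⟩ := large IN β hN hβ hb (α₁ / (1 - r))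
  set M := ∑ p ∈ sN, a p with hM
  have hM0 : 0 < M := (div_pos hα1 h1r).trans hK
  rw [div_lt_iff₀ h1r] at hK
  have hex : ∃ n, ∃ s : Finset α, s.card = n ∧ (s : Set α) ⊆ IA ∧ M ≤ ∑ p ∈ s, a p := by
    obtain ⟨s, hs, hs'⟩ := large IA α₀ hA h0 (fun p hp => (ha p hp).1) M
    exact ⟨_, s, rfl, hs, hs'.le⟩
  obtain ⟨s, hsn, hs, hsM⟩ := Nat.find_spec hex
  have hne : s.Nonempty := by
    rw [Finset.nonempty_iff_ne_empty]
    rintro rfl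
    simp at hsM
    linarith
  obtain ⟨p, hp⟩ := hne
  have hsum := Finset.add_sum_erase s a hp
  have hap := (ha p (hs hp)).2
  have hsub : ((s.erase p : Finset α) : Set α) ⊆ IA := fun q hq =>
    hs (Finset.mem_of_mem_erase hq)
  refine ⟨s.erase p, sN, hsub, hsN, hM0, by nlinarith, ?_⟩
  by_contra hcon
  push Not at hcon
  refine Nat.find_min hex (m := (s.erase p).card) ?_ ⟨_, rfl, hsub, hcon⟩
  rw [← hsn]
  exact Finset.card_erase_lt_of_mem hp

lemma eSize_finset {X : Type*} {ρ : X → X → ℝ} {s : Finset X} {z : X}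
    (h : ∀ y ∈ s, 0 ≤ ρ y z) : eSize ρ (s : Set X) z = ENNReal.ofReal (∑ y ∈ s, ρ y z) := by
  unfold eSize
  rw [ENNReal.ofReal_sum_of_nonneg h]
  exact Finset.tsum_subtype' s fun y => ENNReal.ofReal (ρ y z)

end Main

/-- Approximation lemma for coboundaries: given Borel `A ⊆ X` and `0 < r < 1`, there are an
`E`-invariant Borel set `B`, a Borel set `C ⊆ B`, and a finite Borel subequivalence relation
`F` of `E ↾ C` such that `ρ ↾ (E ↾ Bᶜ)` is smooth,
`r < |A ∩ [x]_F|^{[x]_F ∖ A}_ρ < 1` for all `x ∈ C`, and for each `x ∈ B` either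
`A ∩ [x]_E ⊆ C` or `[x]_E ∖ A ⊆ C`. -/
theorem stmt17 [MeasurableSpace X] [StandardBorelSpace X]
    (E : X → X → Prop) (hE : IsCBER E)
    (ρ : X → X → ℝ) (hρ : IsCocycle E ρ)
    (A : Set X) (hA : MeasurableSet A) (r : ℝ) (hr0 : 0 < r) (hr1 : r < 1) :
    ∃ B C : Set X, MeasurableSet B ∧ EInvariant E B ∧ MeasurableSet C ∧ C ⊆ B ∧
      ∃ F : X → X → Prop, IsFinSubequivOn E C F ∧
        SmoothOn E ρ Bᶜ ∧
        (∀ x ∈ C, ENNReal.ofReal r < relSize ρ (A ∩ {y | F y x}) ({y | F y x} \ A) x ∧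
          relSize ρ (A ∩ {y | F y x}) ({y | F y x} \ A) x < 1) ∧
        ∀ x ∈ B, (A ∩ {y | E x y} ⊆ C ∨ {y | E x y} \ A ⊆ C) := by
  classical
  obtain ⟨g, hg⟩ : ∃ g, Enum E g := cber_functions hE
  obtain ⟨S, hSm, hSE, hSf, hSd, hSall⟩ := pieces hE hg
  have refl := hE.1.refl
  have symm : ∀ {x y}, E x y → E y x := fun h => hE.1.symm h
  have trans : ∀ {x y z}, E x y → E y z → E x z := fun h h' => hE.1.trans h h'
  let sz : ℕ → X → ℝ≥0∞ := fun m x =>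
    relSize ρ (A ∩ {y | S m x y}) ({y | S m x y} \ A) x
  have hsz : ∀ m, Measurable (sz m) := by
    intro m
    have h1 := meas_eSize (Q := fun x y => y ∈ A ∧ S m x y) hg hρ.1
      ((measurable_snd hA).inter (hSm m)) (fun x y h => hSE _ _ _ h.2)
    have h2 := meas_eSize (Q := fun x y => S m x y ∧ y ∉ A) hg hρ.1
      ((hSm m).inter (measurable_snd hA.compl)) (fun x y h => hSE _ _ _ h.1)
    exact h1.div h2
  obtain ⟨D, hDm, hDG, hDd, hDmax⟩ := greedy hE hg hSm hSE hSd
    (Good := fun m => {x | ENNReal.ofReal r < sz m x ∧ sz m x < 1})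
    (fun m => (measurableSet_lt measurable_const (hsz m)).inter
      (measurableSet_lt (hsz m) measurable_const))
  let C0 : Set X := {y | ∃ m, ∃ x ∈ D m, S m x y}
  have hC0 : MeasurableSet C0 := by
    have : C0 = ⋃ m, {y | ∃ x, E y x ∧ (x ∈ D m ∧ S m x y)} := by
      ext y
      simp only [C0, mem_ofPred_eq, mem_iUnion]
      constructor
      · rintro ⟨m, x, h1, h2⟩
        exact ⟨m, x, symm (hSE _ _ _ h2), h1, h2⟩
      · rintro ⟨m, x, -, h1, h2⟩
        exact ⟨m, x, h1, h2⟩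
    rw [this]
    exact MeasurableSet.iUnion fun m => meas_exists (R := fun y x => x ∈ D m ∧ S m x y) hg
      ((measurable_snd (hDm m)).inter (measurable_swap (hSm m)))
  let near : Set X → X → X → Prop := fun R x y => (E x y ∧ y ∈ R) ∧ |Real.log (ρ y x)| < 1
  have hlogm : MeasurableSet {p : X × X | |Real.log (ρ p.2 p.1)| < 1} := by
    refine measurableSet_lt ?_ measurable_const
    exact (Real.measurable_log.comp (hρ.1.comp measurable_swap)).abs
  have hnearm : ∀ R, MeasurableSet R → MeasurableSet {p : X × X | near R p.1 p.2} := by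
    intro R hR
    exact (hE.2.1.inter (measurable_snd hR)).inter hlogm
  let big : Set X → Set X := fun R => R ∩ {x | {y | near R x y}.Infinite}
  have hbigm : ∀ R, MeasurableSet R → MeasurableSet (big R) := fun R hR =>
    hR.inter (meas_infinite hg (hnearm R hR) fun x y h => h.1.1)
  let meets : Set X → Set X := fun R => {x | ∃ y, E x y ∧ y ∈ R}
  have hmeetsm : ∀ R, MeasurableSet R → MeasurableSet (meets R) := fun R hR =>
    meas_exists (R := fun _ y => y ∈ R) hg (measurable_snd hR)
  have hmeetsE : ∀ R x y, E x y → x ∈ meets R → y ∈ meets R := by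
    rintro R x y hxy ⟨z, h1, h2⟩
    exact ⟨z, trans (symm hxy) h1, h2⟩
  let RA : Set X := A \ C0
  let RN : Set X := C0ᶜ \ A
  have hRA : MeasurableSet RA := hA.diff hC0
  have hRN : MeasurableSet RN := hC0.compl.diff hA
  have hno : ∀ x y, x ∈ big RA → y ∈ big RN → E x y → False := by
    intro x y hx hy hxy
    have hexp : ∀ {s : ℝ}, 0 < s → |Real.log s| < 1 →
        Real.exp (-1) ≤ s ∧ s ≤ Real.exp 1 := by
      intro s hs h
      rw [abs_lt] at h
      exact ⟨((Real.lt_log_iff_exp_lt hs).1 h.1).le, ((Real.log_lt_iff_lt_exp hs).1 h.2).le⟩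
    obtain ⟨sA, sN, hsA, hsN, hpos, hlo, hhi⟩ := balance (a := fun p => ρ p x) hx.2 hy.2
      (Real.exp_pos (-1)) (mul_pos (Real.exp_pos (-1)) (hρ.2.1 (symm hxy))) hr1
      (fun p hp => hexp (hρ.2.1 (symm hp.1.1)) hp.2)
      (fun p hp => by
        have h1 : E p y := symm hp.1.1
        rw [hρ.2.2 h1 (symm hxy)]
        exact mul_le_mul_of_nonneg_right (hexp (hρ.2.1 h1) hp.2).1 (hρ.2.1 (symm hxy)).le)
    have hAE : ∀ p ∈ sA, E x p := fun p hp => (hsA hp).1.1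
    have hNE : ∀ p ∈ sN, E x p := fun p hp => trans hxy (hsN hp).1.1
    have hAA : ∀ p ∈ sA, p ∈ RA := fun p hp => (hsA hp).1.2
    have hNN : ∀ p ∈ sN, p ∈ RN := fun p hp => (hsN hp).1.2
    obtain ⟨m, hm⟩ := hSall x (sA ∪ sN) (by
      intro p hp
      rcases Finset.mem_union.1 hp with h | h
      · exact hAE p h
      · exact hNE p h)
    have e1 : A ∩ {y | S m x y} = (sA : Set X) := by
      ext p
      simp only [mem_inter_iff, mem_ofPred_eq, hm, Finset.mem_union, Finset.mem_coe]
      constructor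
      · rintro ⟨h, h' | h'⟩
        · exact h'
        · exact absurd h (hNN p h').2
      · intro h
        exact ⟨(hAA p h).1, Or.inl h⟩
    have e2 : {y | S m x y} \ A = (sN : Set X) := by
      ext p
      simp only [mem_sdiff, mem_ofPred_eq, hm, Finset.mem_union, Finset.mem_coe]
      constructor
      · rintro ⟨h' | h', h⟩
        · exact absurd (hAA p h').1 h
        · exact h'
      · intro h
        exact ⟨Or.inr h, (hNN p h).2⟩
    have hszv : sz m x = ENNReal.ofReal ((∑ p ∈ sA, ρ p x) / ∑ p ∈ sN, ρ p x) := by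
      simp only [sz, relSize]
      rw [e1, e2, eSize_finset fun p hp => (hρ.2.1 (symm (hAE p hp))).le,
        eSize_finset fun p hp => (hρ.2.1 (symm (hNE p hp))).le, ENNReal.ofReal_div_of_pos hpos]
    have hgood : ENNReal.ofReal r < sz m x ∧ sz m x < 1 := by
      rw [hszv]
      constructor
      · have : r < (∑ p ∈ sA, ρ p x) / ∑ p ∈ sN, ρ p x := by rwa [lt_div_iff₀ hpos]
        exact (ENNReal.ofReal_lt_ofReal_iff (hr0.trans this)).2 this
      · rw [ENNReal.ofReal_lt_one, div_lt_one hpos]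
        exact hhi
    have hTC : ∀ z, S m x z → z ∉ C0 := by
      intro z hz
      rcases Finset.mem_union.1 ((hm z).1 hz) with h | h
      · exact (hAA z h).2
      · exact (hNN z h).1
    rcases hDmax m x hgood with h | ⟨z, hz, m', x', hx', hz'⟩
    · have hne : sN.Nonempty := by
        rw [Finset.nonempty_iff_ne_empty]
        rintro rfl
        simp at hpos
      obtain ⟨z, hz⟩ := hne
      have hz' : S m x z := (hm z).2 (Finset.mem_union_right _ hz)
      exact hTC z hz' ⟨m, x, h, hz'⟩
    · exact hTC z hz ⟨m', x', hx', hz'⟩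
  let Bad : Set X := meets RA ∩ meets RN
  have hBad : MeasurableSet Bad := (hmeetsm _ hRA).inter (hmeetsm _ hRN)
  have hBadE : ∀ x y, E x y → x ∈ Bad → y ∈ Bad := fun x y h hx =>
    ⟨hmeetsE _ x y h hx.1, hmeetsE _ x y h hx.2⟩
  have hBE : EInvariant E Badᶜ := fun x y h hx hy => hx (hBadE y x (symm h) hy)
  let M := meets (big RA)
  have hM : MeasurableSet M := hmeetsm _ (hbigm _ hRA)
  let W : Set X := (RA \ M) ∪ (RN ∩ M)
  have hW : MeasurableSet W := (hRA.diff hM).union (hRN.inter hM)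
  have hWfin : ∀ x, {y | (x ∈ W ∧ y ∈ W) ∧ E x y ∧ |Real.log (ρ y x)| < 1}.Finite := by
    intro x
    by_cases hx : x ∈ W
    swap
    · convert Set.finite_empty
      ext y; simp [hx]
    rcases hx with hx | hx
    · have hf : {y | near RA x y}.Finite := by
        by_contra hinf
        exact hx.2 ⟨x, refl x, hx.1, hinf⟩
      apply hf.subset
      rintro y ⟨⟨-, hy⟩, hxy, hl⟩
      rcases hy with hy | hy
      · exact ⟨⟨hxy, hy.1⟩, hl⟩
      · exact absurd (hmeetsE _ y x (symm hxy) hy.2) hx.2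
    · have hf : {y | near RN x y}.Finite := by
        by_contra hinf
        obtain ⟨z, hz, hz'⟩ := hx.2
        exact hno z x hz' ⟨hx.1, hinf⟩ (symm hz)
      apply hf.subset
      rintro y ⟨⟨-, hy⟩, hxy, hl⟩
      rcases hy with hy | hy
      · exact absurd (hmeetsE _ x y hxy hx.2) hy.2
      · exact ⟨⟨hxy, hy.1⟩, hl⟩
  obtain ⟨c, hc, hcc⟩ := finite_coloring
    (R := fun x y => (x ∈ W ∧ y ∈ W) ∧ E x y ∧ |Real.log (ρ y x)| < 1) hg
    (((measurable_fst hW).inter (measurable_snd hW)).inter (hE.2.1.inter hlogm))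
    (fun x y h => h.2.1) hWfin
  have hsmooth : SmoothOn E ρ Badᶜᶜ := by
    rw [compl_compl]
    refine smooth_sat hE hg hρ hW ?_ hc ?_
    · rintro x ⟨⟨y, hy1, hy2⟩, ⟨z, hz1, hz2⟩⟩
      by_cases hx : x ∈ M
      · exact ⟨z, Or.inr ⟨hz2, hmeetsE _ x z hz1 hx⟩, hz1⟩
      · exact ⟨y, Or.inl ⟨hy2, fun h => hx (hmeetsE _ y x (symm hy1) h)⟩, hy1⟩
    · intro x y hx hy hne hxy hl
      exact (hcc y x hne.symm ⟨⟨hy, hx⟩, symm hxy, hl⟩).symm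
  let F : X → X → Prop := fun y y' =>
    y = y' ∨ (y ∈ Badᶜ ∧ ∃ m, ∃ x ∈ D m, S m x y ∧ S m x y')
  have hFsymm : ∀ {x y}, F x y → F y x := by
    rintro x y (h | ⟨h, m, z, hz, h1, h2⟩)
    · exact Or.inl h.symm
    · exact Or.inr ⟨hBE (trans (symm (hSE _ _ _ h1)) (hSE _ _ _ h2)) h, m, z, hz, h2, h1⟩
  refine ⟨Badᶜ, C0 ∩ Badᶜ, hBad.compl, hBE, hC0.inter hBad.compl, inter_subset_right, F,
    ⟨⟨fun x => Or.inl rfl, hFsymm, ?_⟩, ?_, ?_, ?_⟩, hsmooth, ?_, ?_⟩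
  · rintro x y z (rfl | ⟨hx, m, w, hw, h1, h2⟩) h
    · exact h
    · rcases h with rfl | ⟨hy, m', w', hw', h1', h2'⟩
      · exact Or.inr ⟨hx, m, w, hw, h1, h2⟩
      · obtain ⟨rfl, rfl⟩ := hDd m m' w w' y hw hw' h2 h1'
        exact Or.inr ⟨hx, m, w, hw, h1, h2'⟩
  · have : {p : X × X | F p.1 p.2} = {p : X × X | p.1 = p.2} ∪ (Prod.fst ⁻¹' Badᶜ ∩
        ⋃ m, ⋃ n, ((fun p : X × X => g n p.1) ⁻¹' D m ∩
          ((fun p : X × X => (g n p.1, p.1)) ⁻¹' {p : X × X | S m p.1 p.2} ∩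
          (fun p : X × X => (g n p.1, p.2)) ⁻¹' {p : X × X | S m p.1 p.2}))) := by
      ext ⟨y, y'⟩
      simp only [F, mem_ofPred_eq, mem_union, mem_inter_iff, mem_preimage, mem_iUnion]
      refine or_congr Iff.rfl (and_congr Iff.rfl (exists_congr fun m => ?_))
      constructor
      · rintro ⟨x, hx, h1, h2⟩
        obtain ⟨n, rfl⟩ := hg.2.2 y x (symm (hSE _ _ _ h1))
        exact ⟨n, hx, h1, h2⟩
      · rintro ⟨n, hx, h1, h2⟩
        exact ⟨_, hx, h1, h2⟩
    rw [this]
    have hgf : ∀ n, Measurable fun p : X × X => g n p.1 := fun n => (hg.1 n).comp measurable_fst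
    refine (measurableSet_eq_fun measurable_fst measurable_snd).union
      ((measurable_fst hBad.compl).inter (MeasurableSet.iUnion fun m => MeasurableSet.iUnion
        fun n => (hgf n (hDm m)).inter (MeasurableSet.inter ?_ ?_)))
    · exact ((hgf n).prodMk measurable_fst) (hSm m)
    · exact ((hgf n).prodMk measurable_snd) (hSm m)
  · rintro x y (h | ⟨h, m, z, hz, h1, h2⟩)
    · exact Or.inl h
    · have hxy : E x y := trans (symm (hSE _ _ _ h1)) (hSE _ _ _ h2)
      exact Or.inr ⟨hxy, ⟨⟨m, z, hz, h1⟩, h⟩, ⟨⟨m, z, hz, h2⟩, hBE hxy h⟩⟩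
  · intro x
    by_cases hx : ∃ m, ∃ z ∈ D m, S m z x
    · obtain ⟨m, z, hz, h⟩ := hx
      apply ((finite_singleton x).union (hSf m z)).subset
      rintro y (rfl | ⟨-, m', z', hz', h1, h2⟩)
      · exact Or.inl rfl
      · obtain ⟨rfl, rfl⟩ := hDd m m' z z' x hz hz' h h1
        exact Or.inr h2
    · apply (finite_singleton x).subset
      rintro y (rfl | ⟨-, m', z', hz', h1, h2⟩)
      · rfl
      · exact absurd ⟨m', z', hz', h1⟩ hx
  · rintro x ⟨⟨m, z, hz, h⟩, hxB⟩
    have hset : {y | F y x} = {y | S m z y} := by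
      ext y
      constructor
      · rintro (rfl | ⟨-, m', z', hz', h1, h2⟩)
        · exact h
        · obtain ⟨rfl, rfl⟩ := hDd m m' z z' x hz hz' h h2
          exact h1
      · intro hy
        exact Or.inr ⟨hBE (trans (symm (hSE _ _ _ h)) (hSE _ _ _ hy)) hxB, m, z, hz, hy, h⟩
    rw [hset, relSize_base hρ (hSE _ _ _ h) (fun y hy => symm (hSE _ _ _ hy.2))
      (fun y hy => symm (hSE _ _ _ hy.1))]
    exact hDG m hz
  · intro x hx
    by_cases h : x ∈ meets RA
    · right
      rintro y ⟨hy, hyA⟩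
      refine ⟨?_, hBE hy hx⟩
      by_contra hyC
      exact hx ⟨h, y, hy, hyC, hyA⟩
    · left
      rintro y ⟨hyA, hy⟩
      refine ⟨?_, hBE hy hx⟩
      by_contra hyC
      exact h ⟨y, hy, hyA, hyC⟩


end CocycleNadkarni
end
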